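/- arXiv:2109.07209 — 3 statements merged into one kernel-verified Lean document; each statement's English description precedes it below -/
import Mathlib

section
/- For all integers n ≥ 0, α ≥ 0, β ≥ 0 and every k ∈ {1, 2, 3, 4, 5, 6}, the number of (4,8)-regular overpartitions satisfies p̄_{4,8}( 5^{2α} · 7^{2β+1} · (16(7n + k) + 14) ) ≡ 0 (mod 64). -/
/-- The number of `(j,k)`-regular overpartitions of `n`: pairs `(λ, μ)` where `λ` is a
partition of some `m ≤ n` into distinct parts, `μ` is a partition of `n - m`, and no part
of `λ` or `μ` is congruent to `j` modulo `k`. -/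
def regularOverpartitions (j k n : ℕ) : ℕ :=
  ∑ m ∈ Finset.range (n + 1),
    ((Nat.Partition.distincts m).filter (fun lam => ∀ i ∈ lam.parts, i % k ≠ j)).card *
    ((Finset.univ : Finset (Nat.Partition (n - m))).filter
      (fun mu => ∀ i ∈ mu.parts, i % k ≠ j)).card




namespace ROP
open PowerSeries PowerSeries.WithPiTopology Filter Finset

/-- substitution q -> q^2 -/
noncomputable def S : ℤ⟦X⟧ →ₐ[ℤ] ℤ⟦X⟧ := PowerSeries.expand 2 two_ne_zero

lemma coeff_S (f : ℤ⟦X⟧) (n : ℕ) : coeff n (S f) = if 2 ∣ n then coeff (n / 2) f else 0 := by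
  rw [S, coeff_expand]

lemma S_X : S X = X ^ 2 := by simp [S]

lemma continuous_S : Continuous S := by
  rw [continuous_iff_continuousAt]
  intro f
  rw [ContinuousAt, tendsto_iff_coeff_tendsto]
  intro d
  simp only [coeff_S]
  split_ifs
  · exact (continuous_coeff ℤ (d / 2)).continuousAt
  · exact tendsto_const_nhds

lemma mult_of_dvd (f : ℕ → ℤ⟦X⟧) (h : ∀ i, X ^ (i + 1) ∣ f i - 1) : Multipliable f := by
  have := multipliable_one_add_of_tendsto_order_atTop_nhds_top (R := ℤ) (f := fun i => f i - 1) ?_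
  · simpa using this
  · refine ENat.tendsto_nhds_top_iff_natCast_lt.mpr (fun n ↦ Filter.eventually_atTop.mpr ⟨n, ?_⟩)
    intro m hm
    have h1 : ((m + 1 : ℕ) : ℕ∞) ≤ (f m - 1).order := by

      exact PowerSeries.nat_le_order _ _ (PowerSeries.X_pow_dvd_iff.1 (h m))
    refine lt_of_lt_of_le ?_ h1
    exact_mod_cast Nat.lt_succ_of_le hm

lemma approx_fin (f : ℕ → ℤ⟦X⟧) (h : ∀ i, X ^ (i + 1) ∣ f i - 1) (n m : ℕ) :
    X ^ (n + 1) ∣ ∏ i ∈ range (n + m), f i - ∏ i ∈ range n, f i := by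
  induction m with
  | zero => simp
  | succ m ih =>
    rw [← add_assoc, prod_range_succ]
    have : (∏ i ∈ range (n + m), f i) * f (n + m) - ∏ i ∈ range n, f i
      = (∏ i ∈ range (n + m), f i) * (f (n + m) - 1)
        + (∏ i ∈ range (n + m), f i - ∏ i ∈ range n, f i) := by ring
    rw [this]
    refine dvd_add (Dvd.dvd.mul_left ?_ _) ih
    exact (pow_dvd_pow _ (by omega)).trans (h _)

lemma approx (f : ℕ → ℤ⟦X⟧) (h : ∀ i, X ^ (i + 1) ∣ f i - 1) {F : ℤ⟦X⟧} (hF : HasProd f F) (n : ℕ) :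
    X ^ (n + 1) ∣ F - ∏ i ∈ range n, f i := by
  rw [PowerSeries.X_pow_dvd_iff]
  intro d hd
  have h1 := hF.tendsto_prod_nat
  rw [tendsto_iff_coeff_tendsto] at h1
  have h2 := h1 d
  have h3 : Tendsto (fun i => coeff d (∏ i ∈ range i, f i)) atTop
      (nhds (coeff d (∏ i ∈ range n, f i))) := by
    refine tendsto_atTop_of_eventually_const (i₀ := n) fun i hi => ?_
    obtain ⟨m, rfl⟩ := Nat.exists_eq_add_of_le hi
    have := PowerSeries.X_pow_dvd_iff.1 (approx_fin f h n m) d hd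
    rw [map_sub] at this
    linarith
  rw [map_sub, tendsto_nhds_unique h2 h3, sub_self]

lemma dvd_aux (c : ℤ⟦X⟧) {a b : ℕ} (h : a ≤ b) : X ^ a ∣ (1 + c * X ^ b) - 1 := by
  rw [add_sub_cancel_left]
  exact (pow_dvd_pow _ h).mul_left _

lemma dvd_aux1 {a b : ℕ} (h : a ≤ b) : (X : ℤ⟦X⟧) ^ a ∣ (1 + X ^ b) - 1 := by
  simpa using dvd_aux 1 h
lemma dvd_aux2 {a b : ℕ} (h : a ≤ b) : (X : ℤ⟦X⟧) ^ a ∣ (1 - X ^ b) - 1 := by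
  simpa [sub_eq_add_neg] using dvd_aux (-1) h

noncomputable def E : ℤ⟦X⟧ := ∏' i : ℕ, (1 - X ^ (i + 1))
noncomputable def A : ℤ⟦X⟧ := ∏' i : ℕ, (1 + X ^ (i + 1))
noncomputable def Om : ℤ⟦X⟧ := ∏' i : ℕ, (1 - X ^ (2 * i + 1))
noncomputable def Op : ℤ⟦X⟧ := ∏' i : ℕ, (1 + X ^ (2 * i + 1))

lemma hE : HasProd (fun i : ℕ => (1 - X ^ (i + 1) : ℤ⟦X⟧)) E :=
  (mult_of_dvd _ fun i => dvd_aux2 (by omega)).hasProd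
lemma hA : HasProd (fun i : ℕ => (1 + X ^ (i + 1) : ℤ⟦X⟧)) A :=
  (mult_of_dvd _ fun i => dvd_aux1 (by omega)).hasProd
lemma hOm : HasProd (fun i : ℕ => (1 - X ^ (2 * i + 1) : ℤ⟦X⟧)) Om :=
  (mult_of_dvd _ fun i => dvd_aux2 (by omega)).hasProd
lemma hOp : HasProd (fun i : ℕ => (1 + X ^ (2 * i + 1) : ℤ⟦X⟧)) Op :=
  (mult_of_dvd _ fun i => dvd_aux1 (by omega)).hasProd

lemma hS {f : ℕ → ℤ⟦X⟧} {F : ℤ⟦X⟧} (h : HasProd f F) : HasProd (fun i => S (f i)) (S F) :=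
  h.map S continuous_S

lemma cc {f : ℕ → ℤ⟦X⟧} {F : ℤ⟦X⟧} (h : HasProd f F) (h1 : ∀ i, constantCoeff (f i) = 1) :
    constantCoeff F = 1 := by
  have := h.map (constantCoeff (R := ℤ)) (continuous_constantCoeff ℤ)
  have h2 : (fun i => constantCoeff (f i)) = fun _ => (1 : ℤ) := funext h1
  simp only [Function.comp_def] at this
  rw [h2] at this
  exact this.unique hasProd_one

lemma ccE : constantCoeff E = 1 := cc hE (by simp)
lemma ccA : constantCoeff A = 1 := cc hA (by simp)
lemma ccOm : constantCoeff Om = 1 := cc hOm (by simp)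
lemma ccOp : constantCoeff Op = 1 := cc hOp (by simp)
lemma ne_of_cc {f : ℤ⟦X⟧} (h : constantCoeff f = 1) : f ≠ 0 := by
  rintro rfl; simp at h
lemma ccS (f : ℤ⟦X⟧) : constantCoeff (S f) = constantCoeff f := by simp [S]

lemma Om_SE : Om * S E = E := by
  refine HasProd.unique (HasProd.even_mul_odd (f := fun i : ℕ => (1 - X ^ (i + 1) : ℤ⟦X⟧))
    (by simpa using hOm) ?_) hE
  convert! hS hE using 2 with i
  simp only [map_sub, map_one, map_pow, S_X]
  ring

lemma E_A : E * A = S E := by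
  refine (hE.mul hA).unique ?_
  convert! hS hE using 2 with i
  simp only [map_sub, map_one, map_pow, S_X]
  ring

lemma Om_Op : Om * Op = S Om := by
  refine (hOm.mul hOp).unique ?_
  convert! hS hOm using 2 with i
  simp only [map_sub, map_one, map_pow, S_X]
  ring

lemma Om_A : Om * A = 1 := by
  apply mul_right_cancel₀ (ne_of_cc ((ccS E).trans ccE))
  linear_combination A * Om_SE + E_A


noncomputable def D : ℤ⟦X⟧ := PowerSeries.mk fun m =>
  ((((Nat.Partition.distincts m).filter (fun lam => ∀ i ∈ lam.parts, i % 8 ≠ 4)).card : ℕ) : ℤ)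
noncomputable def R : ℤ⟦X⟧ := PowerSeries.mk fun m =>
  ((((Finset.univ : Finset (Nat.Partition m)).filter (fun mu => ∀ i ∈ mu.parts, i % 8 ≠ 4)).card : ℕ) : ℤ)
noncomputable def P : ℤ⟦X⟧ := PowerSeries.mk fun m => (regularOverpartitions 4 8 m : ℤ)

lemma P_eq : P = D * R := by
  ext n
  rw [coeff_mul, Finset.Nat.sum_antidiagonal_eq_sum_range_succ (fun i j => coeff i D * coeff j R)]
  simp [P, D, R, regularOverpartitions]

lemma hD : HasProd (fun i : ℕ => if (i + 1) % 8 ≠ 4 then (1 + X ^ (i + 1) : ℤ⟦X⟧) else 1) D := by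
  convert! Nat.Partition.hasProd_genFun (fun i c ↦ if i % 8 ≠ 4 ∧ c = 1 then (1 : ℤ) else 0) using 1
  · ext1 i
    rw [tsum_eq_single 0]
    · rw [PowerSeries.smul_eq_C_mul]
      split_ifs with h h1 h1 <;> simp_all
    · intro b hb
      rw [PowerSeries.smul_eq_C_mul]
      simp [hb]
  · ext n
    rw [D, coeff_mk, Nat.Partition.coeff_genFun]
    simp_rw [Finsupp.prod, prod_boole]
    rw [Finset.sum_boole]
    congr 2
    ext p
    simp only [Nat.Partition.distincts, Finset.mem_filter, Finset.mem_univ, true_and]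
    simp only [Multiset.toFinsupp_support, Multiset.mem_toFinset, Multiset.toFinsupp_apply]
    rw [Multiset.nodup_iff_count_eq_one]
    grind

lemma hR : HasProd (fun i : ℕ => if (i + 1) % 8 ≠ 4 then ∑' j : ℕ, (X : ℤ⟦X⟧) ^ ((i + 1) * j) else 1) R := by
  exact Nat.Partition.hasProd_powerSeriesMk_card_restricted ℤ (fun i => i % 8 ≠ 4)

lemma inj8 : Function.Injective (fun j : ℕ => 8 * j + 3) := fun a b h => by simpa using h

lemma hSub (f : ℕ → ℤ⟦X⟧) (F : ℤ⟦X⟧) (h : HasProd (fun j => f (8 * j + 3)) F) :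
    HasProd (fun i : ℕ => if (i + 1) % 8 ≠ 4 then 1 else f i) F := by
  rw [← Function.Injective.hasProd_iff inj8]
  · convert! h using 2 with j
    simp only [Function.comp]
    rw [if_neg]
    omega
  · intro x hx
    rw [if_pos]
    intro h4
    apply hx
    exact ⟨(x - 3) / 8, by simp only; omega⟩

lemma D_mul : D * S (S Op) = A := by
  have h2 : HasProd (fun i : ℕ => if (i + 1) % 8 ≠ 4 then (1 : ℤ⟦X⟧) else 1 + X ^ (i + 1)) (S (S Op)) := by
    apply hSub
    convert! hS (hS hOp) using 2 with j
    simp only [map_add, map_one, map_pow, S_X]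
    ring
  refine (hD.mul h2).unique ?_
  convert! hA using 2 with i
  split_ifs <;> simp

lemma R_mul : R * E = S (S Om) := by
  have h2 : HasProd (fun i : ℕ => if (i + 1) % 8 ≠ 4 then (1 : ℤ⟦X⟧) else 1 - X ^ (i + 1)) (S (S Om)) := by
    apply hSub
    convert! hS (hS hOm) using 2 with j
    simp only [map_sub, map_one, map_pow, S_X]
    ring
  refine HasProd.unique ?_ h2
  convert! hR.mul hE using 2 with i
  split_ifs
  · simp_rw [pow_mul]
    rw [tsum_pow_mul_one_sub_of_constantCoeff_eq_zero (by simp)]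
  · simp

/-- phi(-q) -/
noncomputable def F : ℤ⟦X⟧ := Om * E

lemma P_F : P * F * S (S (S F)) = S (S F) := by
  have h1 : P * F * S (S Op) = S (S Om) := by
    rw [P_eq, F]
    linear_combination (R * Om * E) * D_mul + R * E * Om_A + R_mul
  have h2 := congrArg S (congrArg S Om_Op)
  simp only [F, map_mul] at *
  rw [← h2]
  have h3 := congrArg S (congrArg S Om_SE)
  simp only [map_mul] at h3
  linear_combination (S (S Om) * S (S (S E))) * h1 + S (S Om) * h3

/-- triangular numbers -/
def tri : ℕ → ℕ
  | 0 => 0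
  | k + 1 => tri k + k

lemma two_tri (k : ℕ) : 2 * tri k + k = k * k := by
  induction k with
  | zero => rfl
  | succ k ih => simp only [tri]; nlinarith

lemma le_tri (l : ℕ) : l ≤ tri (l + 1) := by simp [tri]

section gb
variable {K : Type*} [CommRing K]

/-- Gaussian binomials -/
def gb (q : K) : ℕ → ℕ → K
  | 0, _ => 1
  | _ + 1, 0 => 1
  | j + 1, k + 1 => gb q j (k + 1) + q ^ (j + 1) * gb q (j + 1) k
termination_by j k => j + k

lemma gb_zero_left (q : K) (k : ℕ) : gb q 0 k = 1 := by simp [gb]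
lemma gb_zero_right (q : K) (j : ℕ) : gb q j 0 = 1 := by cases j <;> simp [gb]
lemma gb_succ (q : K) (j k : ℕ) :
    gb q (j + 1) (k + 1) = gb q j (k + 1) + q ^ (j + 1) * gb q (j + 1) k := by
  rw [gb]

lemma map_gb {L : Type*} [CommRing L] (f : K →+* L) (q : K) (j k : ℕ) :
    f (gb q j k) = gb (f q) j k := by
  induction j generalizing k with
  | zero => simp [gb_zero_left]
  | succ j ihj =>
    induction k with
    | zero => simp [gb_zero_right]
    | succ k ihk => simp [gb_succ, ihj, ihk]

/-- finite q-Pochhammer -/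
def qf (q : K) (n : ℕ) : K := ∏ i ∈ range n, (1 - q ^ (i + 1))

lemma qf_succ (q : K) (n : ℕ) : qf q (n + 1) = qf q n * (1 - q ^ (n + 1)) := by
  simp [qf, prod_range_succ]

lemma qf_gb (q : K) (j k : ℕ) : qf q j * qf q k * gb q j k = qf q (j + k) := by
  induction j generalizing k with
  | zero => simp [gb_zero_left, qf]
  | succ j ihj =>
    induction k with
    | zero => simp [gb_zero_right, qf]
    | succ k ihk =>
      have h1 := ihj (k + 1)
      have e1 : j + 1 + (k + 1) = (j + k + 1) + 1 := by ring
      have e2 : j + (k + 1) = j + k + 1 := by ring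
      have e3 : j + 1 + k = j + k + 1 := by ring
      rw [e2] at h1
      rw [e3] at ihk
      rw [e1, qf_succ q (j + k + 1), gb_succ]
      have h2 := qf_succ q j
      have h3 := qf_succ q k
      calc _ = (1 - q ^ (j + 1)) * (qf q j * qf q (k + 1) * gb q j (k + 1))
            + q ^ (j + 1) * (1 - q ^ (k + 1)) * (qf q (j + 1) * qf q k * gb q (j + 1) k) := by
              rw [h2, h3]; ring
        _ = _ := by rw [h1, ihk]; ring

def tt (q a b : K) (j k : ℕ) : K := q ^ tri k * gb q j k * a ^ j * b ^ k

def uu (q a b : K) : ℕ → ℕ → K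
  | 0, _ => 0
  | j + 1, k => a * tt q a b j k
def vv (q a b : K) : ℕ → ℕ → K
  | _, 0 => 0
  | j, k + 1 => b * q ^ (j + k) * tt q a b j k

lemma tt_eq (q a b : K) (j k : ℕ) (h : 0 < j + k) : tt q a b j k = uu q a b j k + vv q a b j k := by
  rcases j with _ | j <;> rcases k with _ | k
  · omega
  · simp [tt, uu, vv, gb_zero_left, tri]; ring
  · simp [tt, uu, vv, gb_zero_right, tri]; ring
  · simp only [tt, uu, vv, gb_succ, tri]; ring

lemma qbinom (q a b : K) (m : ℕ) :
    ∏ i ∈ range m, (a + b * q ^ i) = ∑ p ∈ antidiagonal m, tt q a b p.1 p.2 := by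
  induction m with
  | zero => simp [tt, gb, tri]
  | succ m ih =>
    rw [prod_range_succ, ih]
    have : ∑ p ∈ antidiagonal (m + 1), tt q a b p.1 p.2
        = ∑ p ∈ antidiagonal (m + 1), uu q a b p.1 p.2
          + ∑ p ∈ antidiagonal (m + 1), vv q a b p.1 p.2 := by
      rw [← sum_add_distrib]
      refine sum_congr rfl fun p hp => tt_eq _ _ _ _ _ ?_
      rw [HasAntidiagonal.mem_antidiagonal] at hp; omega
    rw [this, Finset.Nat.sum_antidiagonal_succ, Finset.Nat.sum_antidiagonal_succ']
    simp only [uu, vv, zero_add]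
    rw [mul_add, sum_mul, sum_mul]
    congr 1
    · exact sum_congr rfl fun p hp => by ring
    · refine sum_congr rfl fun p hp => ?_
      rw [HasAntidiagonal.mem_antidiagonal] at hp
      rw [hp]; ring

end gb

lemma E_unit : IsUnit E := by
  rw [PowerSeries.isUnit_iff_constantCoeff, ccE]; exact isUnit_one

lemma E_gb (m j k : ℕ) (hj : m ≤ j) (hk : m ≤ k) : X ^ (m + 1) ∣ E * gb X j k - 1 := by
  have hq : ∀ i, m ≤ i → X ^ (m + 1) ∣ E - qf X i := fun i hi =>
    (pow_dvd_pow _ (by omega)).trans (approx _ (fun i => dvd_aux2 (by omega)) hE i)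
  have h : X ^ (m + 1) ∣ E * (E * gb X j k - 1) := by
    have h1 := hq j hj
    have h2 := hq k hk
    have h3 := hq (j + k) (by omega)
    have : E * (E * gb X j k - 1) = (E - qf X j) * (E * gb X j k)
      + (E - qf X k) * (qf X j * gb X j k) - (E - qf X (j + k)) := by
      rw [← qf_gb]; ring
    rw [this]
    exact dvd_sub (dvd_add (h1.mul_right _) (h2.mul_right _)) h3
  exact (IsUnit.dvd_mul_left E_unit).1 h

lemma S_dvd {a : ℕ} {f : ℤ⟦X⟧} (h : X ^ a ∣ f) : X ^ (2 * a) ∣ S f := by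
  have := map_dvd S h
  rwa [map_pow, S_X, ← pow_mul] at this

/-- lacunary series -/
noncomputable def lac (e : ℕ → ℕ) (c : ℕ → ℤ) : ℤ⟦X⟧ :=
  PowerSeries.mk fun n => ∑ l ∈ range (n + 1), if e l = n then c l else 0

lemma lac_approx (e : ℕ → ℕ) (c : ℕ → ℤ) (he : ∀ l, l ≤ e l) (n m : ℕ) (hm : n < m) :
    X ^ (n + 1) ∣ lac e c - ∑ l ∈ range m, C (c l) * X ^ e l := by
  rw [PowerSeries.X_pow_dvd_iff]
  intro d hd
  rw [map_sub, map_sum, lac, coeff_mk, sub_eq_zero]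
  simp only [coeff_C_mul_X_pow]
  have : range (d + 1) ⊆ range m := by
    intro x; simp only [mem_range]; omega
  rw [← sum_subset this]
  · exact sum_congr rfl fun x _ => by simp [eq_comm]
  · intro x _ hx
    rw [if_neg]
    have := he x
    simp only [mem_range] at hx
    omega

lemma lac_coeff_one (e : ℕ → ℕ) (he : ∀ l, l ≤ e l) (hi : Function.Injective e) (l : ℕ) (c : ℕ → ℤ) :
    coeff (e l) (lac e c) = c l := by
  rw [lac, coeff_mk, sum_eq_single l]
  · simp
  · intro b _ hb; rw [if_neg]; exact fun h => hb (hi h)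
  · intro h; exfalso; apply h; simp only [mem_range]; have := he l; omega

lemma lac_coeff_zero (e : ℕ → ℕ) (c : ℕ → ℤ) (n : ℕ) (h : ∀ l, e l ≠ n) :
    coeff n (lac e c) = 0 := by
  rw [lac, coeff_mk]
  exact sum_eq_zero fun l _ => if_neg (h l)

noncomputable def y : ℤ⟦X⟧ := lac (fun l => (l + 1) ^ 2) (fun _ => 1)
noncomputable def psi : ℤ⟦X⟧ := lac (fun l => tri (l + 1)) (fun _ => 1)
noncomputable def J : ℤ⟦X⟧ := lac (fun l => tri (l + 1)) (fun l => (-1) ^ l * (2 * l + 1))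
noncomputable def phi : ℤ⟦X⟧ := 1 + 2 * y

lemma eq_of_dvd {f g : ℤ⟦X⟧} (h : ∀ n, X ^ (n + 1) ∣ f - g) : f = g := by
  ext n
  have := PowerSeries.X_pow_dvd_iff.1 (h n) n (by omega)
  rw [map_sub] at this
  linarith

lemma sum_split_odd {M : Type*} [AddCommMonoid M] (f : ℕ → ℕ → M) (n : ℕ) :
    ∑ p ∈ antidiagonal (2 * n + 1), f p.1 p.2
      = ∑ l ∈ range (n + 1), (f (n + 1 + l) (n - l) + f (n - l) (n + 1 + l)) := by
  rw [Finset.Nat.sum_antidiagonal_eq_sum_range_succ f,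
    show (2 * n + 1).succ = (n + 1) + (n + 1) by omega, sum_range_add, sum_add_distrib, add_comm]
  congr 1
  · refine sum_congr rfl fun l hl => ?_
    congr 1; omega
  · rw [← sum_range_reflect]
    refine sum_congr rfl fun l hl => ?_
    rw [mem_range] at hl
    congr 1 <;> omega

lemma sum_split_even {M : Type*} [AddCommMonoid M] (f : ℕ → ℕ → M) (n : ℕ) :
    ∑ p ∈ antidiagonal (2 * n), f p.1 p.2
      = f n n + ∑ l ∈ range n, (f (n + 1 + l) (n - 1 - l) + f (n - 1 - l) (n + 1 + l)) := by
  rw [Finset.Nat.sum_antidiagonal_eq_sum_range_succ f,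
    show (2 * n).succ = n + 1 + n by omega, sum_range_add, sum_range_succ, sum_add_distrib]
  rw [add_comm (∑ x ∈ range n, f x (2 * n - x)), add_assoc,
    add_comm (∑ x ∈ range n, f x (2 * n - x))]
  congr 1
  · congr 1; omega
  congr 1
  · refine sum_congr rfl fun l hl => ?_
    congr 1; omega
  · rw [← sum_range_reflect]
    refine sum_congr rfl fun l hl => ?_
    rw [mem_range] at hl
    congr 1; omega


lemma two_ne : (2 : ℤ⟦X⟧) ≠ 0 := by
  intro h
  have := congrArg (constantCoeff (R := ℤ)) h
  rw [map_ofNat, map_zero] at this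
  norm_num at this

lemma psi_fin (n : ℕ) : 2 * (∏ i ∈ range n, (1 + X ^ (i + 1) : ℤ⟦X⟧)) ^ 2
    = ∑ l ∈ range (n + 1), X ^ tri (l + 1) * (gb X (n + 1 + l) (n - l) + gb X (n - l) (n + 1 + l)) := by
  have h := qbinom (X : ℤ⟦X⟧) (X ^ n) 1 (2 * n + 1)
  rw [sum_split_odd (tt (X : ℤ⟦X⟧) (X ^ n) 1)] at h
  have hX : (X : ℤ⟦X⟧) ^ (tri n + n * (n + 1)) ≠ 0 := pow_ne_zero _ X_ne_zero
  apply mul_left_cancel₀ hX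
  trans ∏ i ∈ range (2 * n + 1), (X ^ n + 1 * X ^ i : ℤ⟦X⟧)
  · rw [show 2 * n + 1 = n + 1 + n by ring, prod_range_add, prod_range_succ, one_mul]
    have h1 : ∏ i ∈ range n, (X ^ n + 1 * X ^ i : ℤ⟦X⟧)
        = X ^ tri n * ∏ i ∈ range n, (1 + X ^ (i + 1) : ℤ⟦X⟧) := by
      have : ∏ i ∈ range n, (1 + X ^ (i + 1) : ℤ⟦X⟧) = ∏ i ∈ range n, (1 + X ^ (n - i) : ℤ⟦X⟧) := by
        rw [← prod_range_reflect]
        refine prod_congr rfl fun i hi => ?_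
        rw [mem_range] at hi
        congr 2; omega
      have ht : (X : ℤ⟦X⟧) ^ tri n = ∏ i ∈ range n, X ^ i := by
        clear h hX this
        induction n with
        | zero => simp [tri]
        | succ n ih => rw [prod_range_succ, ← ih, tri, pow_add]
      rw [this, ht, ← prod_mul_distrib]
      refine prod_congr rfl fun i hi => ?_
      rw [mem_range] at hi
      rw [mul_add, ← pow_add, show i + (n - i) = n by omega]
      ring
    have h2 : ∏ i ∈ range n, (X ^ n + 1 * X ^ (n + 1 + i) : ℤ⟦X⟧)
        = X ^ (n * n) * ∏ i ∈ range n, (1 + X ^ (i + 1) : ℤ⟦X⟧) := by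
      have ht : (X : ℤ⟦X⟧) ^ (n * n) = ∏ i ∈ range n, X ^ n := by
        simp [pow_mul]
      rw [ht, ← prod_mul_distrib]
      refine prod_congr rfl fun i hi => ?_
      ring
    rw [h1, h2]
    ring
  · rw [h, mul_sum]
    refine sum_congr rfl fun l hl => ?_
    rw [mem_range] at hl
    simp only [tt, one_pow, mul_one]
    obtain ⟨d, rfl⟩ := Nat.exists_eq_add_of_le (Nat.lt_succ_iff.1 hl)
    rw [show l + d - l = d by omega]
    have a1 := two_tri d
    have a2 := two_tri (l + d)
    have a3 := two_tri (l + 1)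
    have a4 := two_tri (l + d + 1 + l)
    have e1 : tri d + (l + d) * (l + d + 1 + l) = tri (l + d) + (l + d) * (l + d + 1) + tri (l + 1) := by
      nlinarith
    have e2 : tri (l + d + 1 + l) + (l + d) * d = tri (l + d) + (l + d) * (l + d + 1) + tri (l + 1) := by
      nlinarith
    calc _ = X ^ (tri d + (l + d) * (l + d + 1 + l)) * gb X (l + d + 1 + l) d
          + X ^ (tri (l + d + 1 + l) + (l + d) * d) * gb X d (l + d + 1 + l) := by ring
      _ = _ := by rw [e1, e2]; ring

lemma psi_prod : psi = E * A ^ 2 := by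
  have h2 : (2 : ℤ⟦X⟧) * psi = 2 * (E * A ^ 2) := by
    apply eq_of_dvd
    intro n
    have h1 := lac_approx (fun l => tri (l + 1)) (fun _ => 1) le_tri n (n + 1) (by omega)
    change X ^ (n + 1) ∣ psi - _ at h1
    have hA' := approx _ (fun i => dvd_aux1 (by omega)) hA n
    have h3 : X ^ (n + 1) ∣ ∑ l ∈ range (n + 1), (X ^ tri (l + 1) *
        ((E * gb X (n + 1 + l) (n - l) - 1) + (E * gb X (n - l) (n + 1 + l) - 1))) := by
      refine dvd_sum fun l hl => ?_
      rw [mem_range] at hl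
      have := le_tri l
      refine (pow_dvd_pow X (show n + 1 ≤ tri (l + 1) + (n - l + 1) by omega)).trans ?_
      rw [pow_add]
      exact mul_dvd_mul_left _ (dvd_add (E_gb _ _ _ (by omega) le_rfl) (E_gb _ _ _ le_rfl (by omega)))
    have h4 : ∑ l ∈ range (n + 1), (X ^ tri (l + 1) *
        ((E * gb X (n + 1 + l) (n - l) - 1) + (E * gb X (n - l) (n + 1 + l) - 1)))
        = E * (2 * (∏ i ∈ range n, (1 + X ^ (i + 1) : ℤ⟦X⟧)) ^ 2)
          - 2 * ∑ l ∈ range (n + 1), C (1 : ℤ) * X ^ tri (l + 1) := by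
      rw [psi_fin, mul_sum, mul_sum, ← sum_sub_distrib]
      refine sum_congr rfl fun l hl => ?_
      simp; ring
    rw [h4] at h3
    set B := ∏ i ∈ range n, (1 + X ^ (i + 1) : ℤ⟦X⟧)
    set Z := ∑ l ∈ range (n + 1), C (1 : ℤ) * X ^ tri (l + 1)
    have : 2 * psi - 2 * (E * A ^ 2) = 2 * (psi - Z) - (E * (2 * B ^ 2) - 2 * Z)
      - (A - B) * (2 * E * (A + B)) := by ring
    rw [this]
    exact dvd_sub (dvd_sub (h1.mul_left _) h3) (hA'.mul_right _)
  exact mul_left_cancel₀ two_ne h2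

lemma J_fin (n : ℕ) : (-1) ^ n * (∏ i ∈ range n, (1 - X ^ (i + 1) : ℤ⟦X⟧)) ^ 2
    = ∑ l ∈ range (n + 1), X ^ tri (l + 1) * ((-1) ^ (n - l) * ((n + 1 + l : ℕ) : ℤ⟦X⟧) * gb X (n + 1 + l) (n - l)
      + (-1) ^ (n + 1 + l) * ((n - l : ℕ) : ℤ⟦X⟧) * gb X (n - l) (n + 1 + l)) := by
  have h := qbinom (Polynomial.C (X : ℤ⟦X⟧)) Polynomial.X (-1) (2 * n + 1)
  have hX : (X : ℤ⟦X⟧) ^ (tri n + n * (n + 1)) ≠ 0 := pow_ne_zero _ X_ne_zero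
  apply mul_left_cancel₀ hX
  replace h := congrArg (fun p => X ^ n * Polynomial.eval (X ^ n) (Polynomial.derivative p)) h
  trans X ^ n * ((∏ i ∈ range n, (X ^ n - X ^ i : ℤ⟦X⟧)) * ∏ i ∈ range n, (X ^ n - X ^ (n + 1 + i) : ℤ⟦X⟧))
  · have h1 : ∏ i ∈ range n, (X ^ n - X ^ i : ℤ⟦X⟧)
        = (-1) ^ n * X ^ tri n * ∏ i ∈ range n, (1 - X ^ (i + 1) : ℤ⟦X⟧) := by
      have : ∏ i ∈ range n, (1 - X ^ (i + 1) : ℤ⟦X⟧) = ∏ i ∈ range n, (1 - X ^ (n - i) : ℤ⟦X⟧) := by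
        rw [← prod_range_reflect]
        refine prod_congr rfl fun i hi => ?_
        rw [mem_range] at hi
        congr 2; omega
      have ht : (-1) ^ n * (X : ℤ⟦X⟧) ^ tri n = ∏ i ∈ range n, (-X ^ i) := by
        clear h hX this
        induction n with
        | zero => simp [tri]
        | succ n ih => rw [prod_range_succ, ← ih, tri, pow_add]; ring
      rw [this, ht, ← prod_mul_distrib]
      refine prod_congr rfl fun i hi => ?_
      rw [mem_range] at hi
      rw [mul_sub, neg_mul, neg_mul, ← pow_add, show i + (n - i) = n by omega]
      ring
    have h2 : ∏ i ∈ range n, (X ^ n - X ^ (n + 1 + i) : ℤ⟦X⟧)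
        = X ^ (n * n) * ∏ i ∈ range n, (1 - X ^ (i + 1) : ℤ⟦X⟧) := by
      have ht : (X : ℤ⟦X⟧) ^ (n * n) = ∏ i ∈ range n, X ^ n := by
        simp [pow_mul]
      rw [ht, ← prod_mul_distrib]
      refine prod_congr rfl fun i hi => ?_
      ring
    rw [h1, h2]
    ring
  trans X ^ n * Polynomial.eval (X ^ n) (Polynomial.derivative (∏ i ∈ range (2 * n + 1), (Polynomial.X + -1 * Polynomial.C (X : ℤ⟦X⟧) ^ i)))
  · congr 1
    rw [show 2 * n + 1 = n + 1 + n by ring, prod_range_add, prod_range_succ]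
    simp only [Polynomial.derivative_mul, Polynomial.eval_add, Polynomial.eval_mul, Polynomial.eval_prod]
    have hd : Polynomial.derivative (Polynomial.C (X : ℤ⟦X⟧) ^ n) = 0 := by
      rw [← Polynomial.C_pow, Polynomial.derivative_C]
    simp [sub_eq_add_neg, hd]
  · rw [h, Polynomial.derivative_sum, Polynomial.eval_finsetSum, mul_sum,
      sum_split_odd (fun j k => X ^ n * Polynomial.eval (X ^ n) (Polynomial.derivative
        (tt (Polynomial.C (X : ℤ⟦X⟧)) Polynomial.X (-1) j k))), mul_sum]
    have key : ∀ j k, X ^ n * Polynomial.eval (X ^ n) (Polynomial.derivative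
        (tt (Polynomial.C (X : ℤ⟦X⟧)) Polynomial.X (-1) j k))
        = (-1) ^ k * (j : ℤ⟦X⟧) * X ^ (tri k + n * j) * gb X j k := by
      intro j k
      have : tt (Polynomial.C (X : ℤ⟦X⟧)) Polynomial.X (-1) j k
          = Polynomial.C (X ^ tri k * gb X j k * (-1) ^ k) * Polynomial.X ^ j := by
        simp only [tt, ← map_gb, map_mul, map_pow, map_neg, map_one]
        ring
      rw [this, Polynomial.derivative_C_mul, Polynomial.derivative_X_pow]
      rcases j with _ | j
      · simp
      · simp only [Polynomial.eval_mul, Polynomial.eval_C, Polynomial.eval_pow, Polynomial.eval_X,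
          Nat.add_sub_cancel]
        ring
    refine sum_congr rfl fun l hl => ?_
    rw [mem_range] at hl
    rw [key, key]
    obtain ⟨d, rfl⟩ := Nat.exists_eq_add_of_le (Nat.lt_succ_iff.1 hl)
    rw [show l + d - l = d by omega]
    have a1 := two_tri d
    have a2 := two_tri (l + d)
    have a3 := two_tri (l + 1)
    have a4 := two_tri (l + d + 1 + l)
    have e1 : tri d + (l + d) * (l + d + 1 + l) = tri (l + d) + (l + d) * (l + d + 1) + tri (l + 1) := by
      nlinarith
    have e2 : tri (l + d + 1 + l) + (l + d) * d = tri (l + d) + (l + d) * (l + d + 1) + tri (l + 1) := by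
      nlinarith
    rw [e1, e2]; ring

lemma J_prod : J = E ^ 3 := by
  apply eq_of_dvd
  intro n
  have h1 := lac_approx (fun l => tri (l + 1)) (fun l => (-1) ^ l * (2 * l + 1)) le_tri n (n + 1) (by omega)
  change X ^ (n + 1) ∣ J - _ at h1
  have hA' := approx _ (fun i => dvd_aux2 (by omega)) hE n
  have h3 : X ^ (n + 1) ∣ ∑ l ∈ range (n + 1), (X ^ tri (l + 1) *
      (((-1) ^ (n - l) * ((n + 1 + l : ℕ) : ℤ⟦X⟧)) * (E * gb X (n + 1 + l) (n - l) - 1)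
        + ((-1) ^ (n + 1 + l) * ((n - l : ℕ) : ℤ⟦X⟧)) * (E * gb X (n - l) (n + 1 + l) - 1))) := by
    refine dvd_sum fun l hl => ?_
    rw [mem_range] at hl
    have := le_tri l
    refine (pow_dvd_pow X (show n + 1 ≤ tri (l + 1) + (n - l + 1) by omega)).trans ?_
    rw [pow_add]
    exact mul_dvd_mul_left _ (dvd_add ((E_gb _ _ _ (by omega) le_rfl).mul_left _)
      ((E_gb _ _ _ le_rfl (by omega)).mul_left _))
  have h4 : ∑ l ∈ range (n + 1), (X ^ tri (l + 1) *
      (((-1) ^ (n - l) * ((n + 1 + l : ℕ) : ℤ⟦X⟧)) * (E * gb X (n + 1 + l) (n - l) - 1)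
        + ((-1) ^ (n + 1 + l) * ((n - l : ℕ) : ℤ⟦X⟧)) * (E * gb X (n - l) (n + 1 + l) - 1)))
      = E * ((-1) ^ n * (∏ i ∈ range n, (1 - X ^ (i + 1) : ℤ⟦X⟧)) ^ 2)
        - (-1) ^ n * ∑ l ∈ range (n + 1), C ((-1) ^ l * (2 * l + 1) : ℤ) * X ^ tri (l + 1) := by
    rw [J_fin, mul_sum, mul_sum, ← sum_sub_distrib]
    refine sum_congr rfl fun l hl => ?_
    rw [mem_range] at hl
    obtain ⟨d, rfl⟩ := Nat.exists_eq_add_of_le (Nat.lt_succ_iff.1 hl)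
    rw [show l + d - l = d by omega]
    have hs : (-1 : ℤ⟦X⟧) ^ l * (-1) ^ l = 1 := by rw [← mul_pow]; simp
    simp only [map_mul, map_pow, map_neg, map_one, map_add, map_ofNat, map_natCast]
    push_cast
    ring_nf
    have hs2 : (-1 : ℤ⟦X⟧) ^ (l * 2) = 1 := by rw [mul_comm, pow_mul]; simp
    rw [hs2]
    ring
  rw [h4] at h3
  set B := ∏ i ∈ range n, (1 - X ^ (i + 1) : ℤ⟦X⟧)
  set Z := ∑ l ∈ range (n + 1), C ((-1) ^ l * (2 * l + 1) : ℤ) * X ^ tri (l + 1)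
  have hs : (-1 : ℤ⟦X⟧) ^ n * (-1) ^ n = 1 := by rw [← mul_pow]; simp
  have : J - E ^ 3 = (J - Z) - (-1) ^ n * (E * ((-1) ^ n * B ^ 2) - (-1) ^ n * Z)
    - (E - B) * (E * (E + B)) := by
      linear_combination (E * B ^ 2 - Z) * hs
  rw [this]
  exact dvd_sub (dvd_sub h1 (h3.mul_left _)) (hA'.mul_right _)

lemma phi_fin (n : ℕ) : (∏ i ∈ range n, (1 + X ^ (2 * i + 1) : ℤ⟦X⟧)) ^ 2
    = S (gb X n n) + ∑ l ∈ range n, X ^ ((l + 1) ^ 2) *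
      (S (gb X (n + 1 + l) (n - 1 - l)) + S (gb X (n - 1 - l) (n + 1 + l))) := by
  have h := qbinom (X ^ 2 : ℤ⟦X⟧) (X ^ (2 * n)) X (2 * n)
  rw [sum_split_even (tt (X ^ 2 : ℤ⟦X⟧) (X ^ (2 * n)) X)] at h
  have hX : (X : ℤ⟦X⟧) ^ (3 * n * n) ≠ 0 := pow_ne_zero _ X_ne_zero
  apply mul_left_cancel₀ hX
  have hgb : ∀ j k, S (gb X j k) = gb (X ^ 2 : ℤ⟦X⟧) j k := by
    intro j k
    rw [← S_X]
    exact map_gb (S : ℤ⟦X⟧ →+* ℤ⟦X⟧) X j k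
  simp only [hgb]
  trans ∏ i ∈ range (2 * n), (X ^ (2 * n) + X * (X ^ 2) ^ i : ℤ⟦X⟧)
  · rw [show 2 * n = n + n by ring, prod_range_add]
    have h1 : ∏ i ∈ range n, (X ^ (n + n) + X * (X ^ 2) ^ i : ℤ⟦X⟧)
        = X ^ (n * n) * ∏ i ∈ range n, (1 + X ^ (2 * i + 1) : ℤ⟦X⟧) := by
      have : ∏ i ∈ range n, (1 + X ^ (2 * i + 1) : ℤ⟦X⟧)
          = ∏ i ∈ range n, (1 + X ^ (2 * (n - 1 - i) + 1) : ℤ⟦X⟧) := by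
        rw [← prod_range_reflect]
      have ht : (X : ℤ⟦X⟧) ^ (n * n) = ∏ i ∈ range n, X ^ (2 * i + 1) := by
        clear h hX this
        induction n with
        | zero => simp
        | succ n ih => rw [prod_range_succ, ← ih]; ring
      rw [this, ht, ← prod_mul_distrib]
      refine prod_congr rfl fun i hi => ?_
      rw [mem_range] at hi
      rw [mul_add, ← pow_add, show 2 * i + 1 + (2 * (n - 1 - i) + 1) = n + n by omega]
      ring
    have h2 : ∏ i ∈ range n, (X ^ (n + n) + X * (X ^ 2) ^ (n + i) : ℤ⟦X⟧)
        = X ^ (2 * n * n) * ∏ i ∈ range n, (1 + X ^ (2 * i + 1) : ℤ⟦X⟧) := by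
      have ht : (X : ℤ⟦X⟧) ^ (2 * n * n) = ∏ i ∈ range n, X ^ (2 * n) := by
        rw [prod_const, card_range, ← pow_mul]
      rw [ht, ← prod_mul_distrib]
      refine prod_congr rfl fun i hi => ?_
      ring
    rw [h1, h2]
    ring
  · rw [h, mul_add, mul_sum]
    have gen : ∀ j k d, 2 * tri k + 2 * n * j + k = 3 * n * n + d →
        tt (X ^ 2 : ℤ⟦X⟧) (X ^ (2 * n)) X j k = X ^ (3 * n * n) * (X ^ d * gb (X ^ 2) j k) := by
      intro j k d hd
      calc _ = X ^ (2 * tri k + 2 * n * j + k) * gb (X ^ 2 : ℤ⟦X⟧) j k := by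
              simp only [tt]; ring
        _ = _ := by rw [hd]; ring
    congr 1
    · rw [gen n n 0]
      · simp
      · have := two_tri n; nlinarith
    refine sum_congr rfl fun l hl => ?_
    rw [mem_range] at hl
    obtain ⟨d, rfl⟩ := Nat.exists_eq_add_of_le (Nat.succ_le_of_lt hl)
    rw [show l.succ + d - 1 - l = d by omega]
    have a1 := two_tri d
    have a4 := two_tri (l.succ + d + 1 + l)
    rw [gen _ _ ((l + 1) ^ 2), gen _ _ ((l + 1) ^ 2)]
    · ring
    · simp only [Nat.succ_eq_add_one] at *; nlinarith
    · simp only [Nat.succ_eq_add_one] at *; nlinarith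

lemma phi_prod : phi = Op ^ 2 * S E := by
  apply eq_of_dvd
  intro n
  have h1 := lac_approx (fun l => (l + 1) ^ 2) (fun _ => 1) (fun l => by nlinarith) n (n + 1) (by omega)
  change X ^ (n + 1) ∣ y - _ at h1
  have hA' := approx _ (fun i => dvd_aux1 (by omega)) hOp (n + 1)
  replace hA' := (pow_dvd_pow X (show n + 1 ≤ n + 1 + 1 by omega)).trans hA'
  have hg : ∀ m j k, m ≤ j → m ≤ k → X ^ (2 * (m + 1)) ∣ S E * S (gb X j k) - 1 := by
    intro m j k hj hk
    simpa using S_dvd (E_gb m j k hj hk)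
  have h3 : X ^ (n + 1) ∣ (S E * S (gb X (n + 1) (n + 1)) - 1) + ∑ l ∈ range (n + 1), (X ^ ((l + 1) ^ 2) *
      ((S E * S (gb X (n + 1 + 1 + l) (n + 1 - 1 - l)) - 1) + (S E * S (gb X (n + 1 - 1 - l) (n + 1 + 1 + l)) - 1))) := by
    refine dvd_add ((pow_dvd_pow X (by omega)).trans (hg (n + 1) _ _ le_rfl le_rfl)) (dvd_sum fun l hl => ?_)
    rw [mem_range] at hl
    refine (pow_dvd_pow X (show n + 1 ≤ (l + 1) ^ 2 + 2 * (n - l + 1) by nlinarith [Nat.sub_add_cancel (Nat.lt_succ_iff.1 hl)])).trans ?_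
    rw [pow_add]
    exact mul_dvd_mul_left _ (dvd_add (hg _ _ _ (by omega) (by omega)) (hg _ _ _ (by omega) (by omega)))
  have h4 : (S E * S (gb X (n + 1) (n + 1)) - 1) + ∑ l ∈ range (n + 1), (X ^ ((l + 1) ^ 2) *
      ((S E * S (gb X (n + 1 + 1 + l) (n + 1 - 1 - l)) - 1) + (S E * S (gb X (n + 1 - 1 - l) (n + 1 + 1 + l)) - 1)))
      = S E * (∏ i ∈ range (n + 1), (1 + X ^ (2 * i + 1) : ℤ⟦X⟧)) ^ 2
        - (1 + 2 * ∑ l ∈ range (n + 1), C (1 : ℤ) * X ^ ((l + 1) ^ 2)) := by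
    rw [phi_fin, mul_add, mul_sum, mul_sum, add_sub_add_comm, ← sum_sub_distrib]
    congr 1
    refine sum_congr rfl fun l hl => ?_
    simp only [map_one]; ring
  rw [h4] at h3
  set B := ∏ i ∈ range (n + 1), (1 + X ^ (2 * i + 1) : ℤ⟦X⟧)
  set Z := ∑ l ∈ range (n + 1), C (1 : ℤ) * X ^ ((l + 1) ^ 2)
  have : phi - Op ^ 2 * S E = 2 * (y - Z) - (S E * B ^ 2 - (1 + 2 * Z))
    - (Op - B) * (S E * (Op + B)) := by rw [phi]; ring
  rw [this]
  exact dvd_sub (dvd_sub (h1.mul_left _) h3) (hA'.mul_right _)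

/-- q -> -q -/
noncomputable def N : ℤ⟦X⟧ →+* ℤ⟦X⟧ := rescale (-1 : ℤ)

lemma coeff_N (f : ℤ⟦X⟧) (n : ℕ) : coeff n (N f) = (-1) ^ n * coeff n f := by
  rw [N, coeff_rescale]

lemma N_X : N X = -X := by
  rw [N, rescale_X]; simp

lemma N_S (f : ℤ⟦X⟧) : N (S f) = S f := by
  ext n
  rw [coeff_N, coeff_S]
  split_ifs with h
  · rw [(even_iff_two_dvd.2 h).neg_one_pow, one_mul]
  · simp

lemma continuous_N : Continuous N := by
  rw [continuous_iff_continuousAt]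
  intro f
  rw [ContinuousAt, tendsto_iff_coeff_tendsto]
  intro d
  simp only [coeff_N]
  exact ((continuous_coeff ℤ d).continuousAt (x := f)).const_mul _

lemma N_Om : N Om = Op := by
  refine (hOm.map N continuous_N).unique ?_
  convert! hOp using 2 with i
  simp only [Function.comp, map_sub, map_one, map_pow, N_X]
  rw [Odd.neg_pow ⟨i, rfl⟩]; ring

lemma N_Op : N Op = Om := by
  refine (hOp.map N continuous_N).unique ?_
  convert! hOm using 2 with i
  simp only [Function.comp, map_add, map_one, map_pow, N_X]
  rw [Odd.neg_pow ⟨i, rfl⟩]; ring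

lemma F_eq : F = Om ^ 2 * S E := by
  rw [F]; linear_combination -Om * Om_SE

lemma N_phi : N phi = F := by
  rw [phi_prod, F_eq, map_mul, map_pow, N_Op, N_S]
lemma N_F : N F = phi := by
  rw [phi_prod, F_eq, map_mul, map_pow, N_Om, N_S]

lemma phi_F : phi * F = S F ^ 2 := by
  have h : S F = Om * Op * S E := by rw [F, map_mul, Om_Op]
  rw [h, phi_prod, F_eq]; ring

lemma F_psi : F ^ 2 * psi = J := by
  rw [psi_prod, J_prod, F]
  linear_combination E ^ 3 * (Om * A + 1) * Om_A

lemma S_inj : Function.Injective S := by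
  intro f g h
  ext n
  have := congrArg (coeff (2 * n)) h
  rw [coeff_S, coeff_S, if_pos ⟨n, rfl⟩, if_pos ⟨n, rfl⟩, Nat.mul_div_cancel_left _ two_pos] at this
  exact this

lemma coeff_even (a b : ℤ⟦X⟧) (n : ℕ) : coeff (2 * n) (S a + X * S b) = coeff n a := by
  rw [map_add, coeff_S, if_pos ⟨n, rfl⟩, Nat.mul_div_cancel_left _ two_pos]
  rcases n with _ | n
  · simp
  · rw [show 2 * (n + 1) = (2 * n + 1) + 1 by ring, coeff_succ_X_mul, coeff_S, if_neg (by omega), add_zero]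

lemma coeff_odd (a b : ℤ⟦X⟧) (n : ℕ) : coeff (2 * n + 1) (S a + X * S b) = coeff n b := by
  rw [map_add, coeff_S, if_neg (by omega), coeff_succ_X_mul, coeff_S, if_pos ⟨n, rfl⟩,
    Nat.mul_div_cancel_left _ two_pos, zero_add]

lemma tri_inj : Function.Injective (fun l => tri (l + 1)) := by
  intro a b h
  have h1 := two_tri (a + 1)
  have h2 := two_tri (b + 1)
  simp only at h
  rw [h] at h1
  nlinarith [lt_trichotomy a b]

lemma sq_inj : Function.Injective (fun l : ℕ => (l + 1) ^ 2) := by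
  intro a b h
  simpa using h

lemma y_sq (l : ℕ) : coeff ((l + 1) ^ 2) y = 1 :=
  lac_coeff_one _ (fun l => by nlinarith) sq_inj l _
lemma psi_tri (l : ℕ) : coeff (tri (l + 1)) psi = 1 :=
  lac_coeff_one _ le_tri tri_inj l _

lemma y_split : y = S (S y) + X * S (S (S psi)) := by
  ext n
  obtain ⟨m, rfl | rfl⟩ : ∃ m, n = 2 * m ∨ n = 2 * m + 1 := ⟨n / 2, by omega⟩
  · rw [coeff_even, coeff_S]
    split_ifs with h
    · obtain ⟨k, rfl⟩ := h
      rw [Nat.mul_div_cancel_left _ two_pos]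
      by_cases hk : ∃ l, (l + 1) ^ 2 = k
      · obtain ⟨l, rfl⟩ := hk
        rw [y_sq, show 2 * (2 * (l + 1) ^ 2) = (2 * l + 1 + 1) ^ 2 by ring, y_sq]
      · rw [y, lac_coeff_zero, lac_coeff_zero]
        · exact fun l hl => hk ⟨l, hl⟩
        · intro l hl
          obtain ⟨r, rfl | rfl⟩ : ∃ r, l = 2 * r ∨ l = 2 * r + 1 := ⟨l / 2, by omega⟩
          · ring_nf at hl; omega
          · apply hk ⟨r, by ring_nf at hl ⊢; omega⟩
    · rw [y, lac_coeff_zero]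
      intro l hl
      obtain ⟨r, rfl | rfl⟩ : ∃ r, l = 2 * r ∨ l = 2 * r + 1 := ⟨l / 2, by omega⟩
      · ring_nf at hl; omega
      · ring_nf at hl; omega
  · rw [coeff_odd]
    by_cases hk : ∃ l, 4 * tri (l + 1) = m
    · obtain ⟨l, rfl⟩ := hk
      rw [show 4 * tri (l + 1) = 2 * (2 * tri (l + 1)) by ring, coeff_S, if_pos ⟨_, rfl⟩,
        Nat.mul_div_cancel_left _ two_pos, coeff_S, if_pos ⟨_, rfl⟩,
        Nat.mul_div_cancel_left _ two_pos, psi_tri]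
      have := two_tri (l + 1)
      rw [show 2 * (2 * (2 * tri (l + 1))) + 1 = (2 * l + 1) ^ 2 by nlinarith]
      exact y_sq (2 * l)
    · rw [y, lac_coeff_zero, coeff_S]
      · split_ifs with h
        · rw [coeff_S]
          split_ifs with h'
          · rw [psi, lac_coeff_zero]
            intro l hl
            exact hk ⟨l, by omega⟩
          · rfl
        · rfl
      · intro l hl
        obtain ⟨r, rfl | rfl⟩ : ∃ r, l = 2 * r ∨ l = 2 * r + 1 := ⟨l / 2, by omega⟩
        · have := two_tri (r + 1)
          exact hk ⟨r, by nlinarith⟩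
        · ring_nf at hl; omega

lemma phi_split : phi = S (S phi) + 2 * X * S (S (S psi)) := by
  have := y_split
  simp only [phi, map_add, map_mul, map_one, map_ofNat]
  linear_combination 2 * this

lemma F_sq : F ^ 2 = S phi ^ 2 - 4 * X * S (S psi) ^ 2 := by
  apply S_inj
  have h := congrArg N phi_split
  rw [N_phi] at h
  simp only [map_add, map_mul, N_S, N_X, map_ofNat] at h
  simp only [map_sub, map_mul, map_pow, S_X, map_ofNat]
  linear_combination -phi_F + F * phi_split + (S (S phi) + 2 * X * S (S (S psi))) * h

lemma phi_sq : phi ^ 2 = S phi ^ 2 + 4 * X * S (S psi) ^ 2 := by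
  have h := congrArg N F_sq
  simp only [map_sub, map_mul, map_pow, N_S, N_X, N_F, map_ofNat] at h
  linear_combination h

lemma psi_sq : psi ^ 2 = phi * S psi := by
  apply S_inj
  apply S_inj
  have h4 : (4 * X : ℤ⟦X⟧) ≠ 0 := by
    rw [show (4 : ℤ⟦X⟧) = 2 * 2 by norm_num]
    exact mul_ne_zero (mul_ne_zero two_ne two_ne) X_ne_zero
  apply mul_left_cancel₀ h4
  have h1 := phi_sq
  have h2 := congrArg S phi_sq
  have h3 := phi_split
  simp only [map_add, map_mul, map_pow, S_X, map_ofNat] at *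
  linear_combination -h1 - h2 + (phi + S (S phi) + 2 * X * S (S (S psi))) * h3

lemma y_frob : ∃ z : ℤ⟦X⟧, y ^ 2 = S y + 2 * z := by
  have h : PowerSeries.map (Int.castRingHom (ZMod 2)) (y ^ 2) = PowerSeries.map (Int.castRingHom (ZMod 2)) (S y) := by
    rw [S, map_expand, map_pow]
    have := MvPowerSeries.map_frobenius_expand (p := 2) (hp := two_ne_zero) (R := ZMod 2)
      (f := (PowerSeries.map (Int.castRingHom (ZMod 2)) y))
    rw [ZMod.frobenius_zmod] at this
    erw [← this]
    ext n
    simp [PowerSeries.expand]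
  refine ⟨PowerSeries.mk fun n => (coeff n (y ^ 2) - coeff n (S y)) / 2, ?_⟩
  ext n
  have h1 := congrArg (coeff n) h
  rw [coeff_map, coeff_map] at h1
  have h2 : (2 : ℤ) ∣ coeff n (y ^ 2) - coeff n (S y) := by
    rw [← sub_eq_zero, ← map_sub] at h1
    exact (ZMod.intCast_zmod_eq_zero_iff_dvd _ 2).1 h1
  rw [map_add, show (2 : ℤ⟦X⟧) = C 2 by simp, coeff_C_mul, coeff_mk, Int.mul_ediv_cancel' h2]
  ring

lemma mod16 : ∃ K : ℤ⟦X⟧, F ^ 8 = 1 + 16 * K := by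
  have : F = 1 + 2 * N y := by rw [← N_phi, phi, map_add, map_mul, map_one, map_ofNat]
  rw [this]
  generalize N y = x
  refine ⟨x + 7 * x ^ 2 + 28 * x ^ 3 + 70 * x ^ 4 + 112 * x ^ 5 + 112 * x ^ 6 + 64 * x ^ 7 + 16 * x ^ 8, ?_⟩
  ring

lemma coeff_int_mul (m : ℤ) (f : ℤ⟦X⟧) (n : ℕ) : coeff n ((m : ℤ⟦X⟧) * f) = m * coeff n f := by
  rw [show (m : ℤ⟦X⟧) = C m by simp, coeff_C_mul]

lemma key (n : ℕ) (h0 : coeff n J = 0) (h1 : coeff n (J * y) = 0) (h2 : coeff n (J * S y) = 0) :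
    (64 : ℤ) ∣ regularOverpartitions 4 8 (16 * n + 2) := by
  have hFu : IsUnit F := by
    rw [PowerSeries.isUnit_iff_constantCoeff, F, map_mul, ccOm, ccE]; simp
  obtain ⟨G, hFG⟩ := hFu.exists_right_inv
  have hS1 : S F * S G = 1 := by rw [← map_mul, hFG, map_one]
  have hS2 : S (S F) * S (S G) = 1 := by rw [← map_mul, hS1, map_one]
  have hS3 : S (S (S F)) * S (S (S G)) = 1 := by rw [← map_mul, hS2, map_one]
  have hG : G = phi * S G ^ 2 := by
    linear_combination (phi * S G ^ 2) * hFG - G * S G ^ 2 * phi_F - G * (S F * S G + 1) * hS1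
  have hSG : S G = S phi * S (S G) ^ 2 := by
    have := congrArg S hG
    simpa only [map_mul, map_pow] using this
  have hP : P = phi * S phi ^ 2 * S (S G) ^ 3 * S (S (S G)) := by
    have e1 : P = S (S F) * G * S (S (S G)) := by
      linear_combination G * S (S (S G)) * P_F - P * hFG - P * F * G * hS3
    calc P = S (S F) * G * S (S (S G)) := e1
      _ = S (S F) * (phi * (S phi * S (S G) ^ 2) ^ 2) * S (S (S G)) := by rw [← hSG, ← hG]
      _ = (S (S F) * S (S G)) * phi * S phi ^ 2 * S (S G) ^ 3 * S (S (S G)) := by ring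
      _ = _ := by rw [hS2, one_mul]
  have d1 : P = S (S phi * phi ^ 2 * S G ^ 3 * S (S G))
      + X * S (2 * S (S psi) * phi ^ 2 * S G ^ 3 * S (S G)) := by
    rw [hP]
    simp only [map_mul, map_pow, map_ofNat]
    linear_combination (S phi ^ 2 * S (S G) ^ 3 * S (S (S G))) * phi_split
  have d2 : S phi * phi ^ 2 * S G ^ 3 * S (S G) = S (phi * phi ^ 2 * G ^ 3 * S G)
      + X * S (4 * phi * S psi ^ 2 * G ^ 3 * S G) := by
    simp only [map_mul, map_pow, map_ofNat]
    linear_combination (S phi * S G ^ 3 * S (S G)) * phi_sq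
  have d3a : 4 * phi * S psi ^ 2 * G ^ 3 * S G = 4 * phi ^ 4 * S psi ^ 2 * S G ^ 7 := by
    calc _ = 4 * phi * S psi ^ 2 * (phi * S G ^ 2) ^ 3 * S G := by rw [← hG]
      _ = _ := by ring
  have phi4 : phi ^ 4 = S (phi ^ 4 + 16 * X * S psi ^ 4) + X * S (8 * phi ^ 2 * S psi ^ 2) := by
    simp only [map_mul, map_pow, map_ofNat, map_add, S_X]
    linear_combination (phi ^ 2 + S phi ^ 2 + 4 * X * S (S psi) ^ 2) * phi_sq
  have d3 : 4 * phi * S psi ^ 2 * G ^ 3 * S G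
      = S (4 * (phi ^ 4 + 16 * X * S psi ^ 4) * psi ^ 2 * G ^ 7)
      + X * S (4 * (8 * phi ^ 2 * S psi ^ 2) * psi ^ 2 * G ^ 7) := by
    rw [d3a]
    simp only [map_mul S (_ * _) (G ^ 7), map_mul S _ (psi ^ 2), map_mul S 4, map_pow S _ 7,
      map_pow S psi 2, map_ofNat]
    linear_combination 4 * S psi ^ 2 * S G ^ 7 * phi4
  obtain ⟨K, hK⟩ := mod16
  have hG7 : G ^ 7 = F - 16 * K * G ^ 7 := by
    have : F ^ 8 * G ^ 7 = F := by
      calc _ = (F * G) ^ 7 * F := by ring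
        _ = F := by rw [hFG]; ring
    linear_combination this - G ^ 7 * hK
  have d4 : 4 * (phi ^ 4 + 16 * X * S psi ^ 4) * psi ^ 2 * G ^ 7
      = S (4 * (phi ^ 4 + 16 * X * S psi ^ 4) * F ^ 2 * psi)
      + X * S (4 * (8 * phi ^ 2 * S psi ^ 2) * F ^ 2 * psi)
      + ((64 : ℤ) : ℤ⟦X⟧) * (X * S psi ^ 4 * psi ^ 2 * G ^ 7 - phi ^ 4 * psi ^ 2 * K * G ^ 7) := by
    simp only [map_mul S (_ * _) psi, map_mul S _ (F ^ 2), map_mul S 4,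
      map_pow S F 2, map_ofNat]
    push_cast
    linear_combination 4 * phi ^ 4 * psi ^ 2 * hG7 + 4 * phi ^ 4 * F * psi_sq
      + 4 * phi ^ 4 * S psi * phi_F + 4 * S F ^ 2 * S psi * phi4
  obtain ⟨z, hz⟩ := y_frob
  have d5 : 4 * (phi ^ 4 + 16 * X * S psi ^ 4) * F ^ 2 * psi
      = ((4 : ℤ) : ℤ⟦X⟧) * J + ((32 : ℤ) : ℤ⟦X⟧) * (J * y) + ((32 : ℤ) : ℤ⟦X⟧) * (J * S y)
        + ((64 : ℤ) : ℤ⟦X⟧) * (J * (z + y ^ 2 + 2 * y ^ 3 + y ^ 4 + X * S psi ^ 4)) := by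
    have : phi ^ 4 = (1 + 2 * y) ^ 4 := rfl
    push_cast
    linear_combination 4 * (phi ^ 4 + 16 * X * S psi ^ 4) * F_psi + 4 * J * this + 32 * J * hz
  have f1 : (regularOverpartitions 4 8 (16 * n + 2) : ℤ) = coeff (16 * n + 2) P := by simp [P]
  rw [f1, show 16 * n + 2 = 2 * (2 * (2 * (2 * n)) + 1) by ring, d1, coeff_even, d2, coeff_odd, d3,
    coeff_even, d4, map_add, coeff_even, d5, coeff_int_mul]
  simp only [map_add, coeff_int_mul, h0, h1, h2]
  omega

lemma seven (x w c : ℕ) (hc : c = 1 ∨ c = 2) (h : 7 ∣ x ^ 2 + c * w ^ 2) : 7 ∣ x ∧ 7 ∣ w := by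
  have hx : x % 7 < 7 := Nat.mod_lt _ (by norm_num)
  have hw : w % 7 < 7 := Nat.mod_lt _ (by norm_num)
  rw [Nat.dvd_iff_mod_eq_zero, Nat.dvd_iff_mod_eq_zero]
  rw [Nat.dvd_iff_mod_eq_zero, Nat.add_mod, Nat.mul_mod, Nat.pow_mod x, Nat.pow_mod w] at h
  generalize x % 7 = a at *
  generalize w % 7 = b at *
  rcases hc with rfl | rfl <;> interval_cases a <;> interval_cases b <;> simp at h ⊢

lemma no_rep (c : ℕ) (hc : c = 1 ∨ c = 2) (t : ℕ) (ht : ¬ 7 ∣ t) (β : ℕ) :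
    ∀ x w : ℕ, x ^ 2 + c * w ^ 2 ≠ 7 ^ (2 * β + 1) * t := by
  induction β with
  | zero =>
    intro x w h
    obtain ⟨⟨x, rfl⟩, ⟨w, rfl⟩⟩ := seven x w c hc ⟨t, by rw [h]; ring⟩
    apply ht
    refine ⟨x ^ 2 + c * w ^ 2, ?_⟩
    ring_nf at h ⊢
    omega
  | succ β ih =>
    intro x w h
    obtain ⟨⟨x, rfl⟩, ⟨w, rfl⟩⟩ := seven x w c hc ⟨7 ^ (2 * β + 2) * t, by rw [h]; ring⟩
    apply ih x w
    have : 49 * (x ^ 2 + c * w ^ 2) = 49 * (7 ^ (2 * β + 1) * t) := by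
      calc _ = (7 * x) ^ 2 + c * (7 * w) ^ 2 := by ring
        _ = _ := by rw [h]; ring
    omega

lemma lac_ne (e : ℕ → ℕ) (c : ℕ → ℤ) (n : ℕ) (h : coeff n (lac e c) ≠ 0) : ∃ l, e l = n := by
  by_contra hc
  push Not at hc
  exact h (lac_coeff_zero e c n hc)

lemma key2 (n : ℕ) (h : ∀ c, (c = 1 ∨ c = 2) → ∀ x w : ℕ, x ^ 2 + c * w ^ 2 ≠ 8 * n + 1) :
    (64 : ℤ) ∣ regularOverpartitions 4 8 (16 * n + 2) := by
  have hJ : ∀ m, coeff m J ≠ 0 → ∃ l : ℕ, (2 * l + 1) ^ 2 = 8 * m + 1 := by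
    intro m hm
    obtain ⟨l, hl⟩ := lac_ne _ _ _ hm
    have := two_tri (l + 1)
    exact ⟨l, by nlinarith⟩
  have hy : ∀ m, coeff m y ≠ 0 → ∃ l : ℕ, l ^ 2 = m := by
    intro m hm
    obtain ⟨l, hl⟩ := lac_ne _ _ _ hm
    exact ⟨l + 1, hl⟩
  apply key
  · by_contra hc
    obtain ⟨l, hl⟩ := hJ _ hc
    exact h 1 (Or.inl rfl) (2 * l + 1) 0 (by rw [hl]; ring)
  · rw [coeff_mul]
    refine sum_eq_zero fun p hp => ?_
    rw [HasAntidiagonal.mem_antidiagonal] at hp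
    by_contra hc
    obtain ⟨l, hl⟩ := hJ _ (left_ne_zero_of_mul hc)
    obtain ⟨r, hr⟩ := hy _ (right_ne_zero_of_mul hc)
    exact h 2 (Or.inr rfl) (2 * l + 1) (2 * r) (by rw [hl, ← hp, ← hr]; ring)
  · rw [coeff_mul]
    refine sum_eq_zero fun p hp => ?_
    rw [HasAntidiagonal.mem_antidiagonal] at hp
    by_contra hc
    obtain ⟨l, hl⟩ := hJ _ (left_ne_zero_of_mul hc)
    have h2 := right_ne_zero_of_mul hc
    rw [coeff_S] at h2
    split_ifs at h2 with h3
    · obtain ⟨r, hr⟩ := hy _ h2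
      exact h 1 (Or.inl rfl) (2 * l + 1) (4 * r) (by
        have : p.2 = 2 * r ^ 2 := by omega
        rw [hl, ← hp, this]; ring)
    · exact h2 rfl

end ROP

theorem stmt_1 (n α β : ℕ) (k : ℕ) (hk : k ∈ ({1, 2, 3, 4, 5, 6} : Finset ℕ)) :
    64 ∣ regularOverpartitions 4 8 (5 ^ (2 * α) * 7 ^ (2 * β + 1) * (16 * (7 * n + k) + 14)) := by
  have hk7 : ¬ 7 ∣ k := by
    simp only [Finset.mem_insert, Finset.mem_singleton] at hk
    omega
  have ht : ¬ 7 ∣ 5 ^ (2 * α) * (8 * (7 * n + k) + 7) := by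
    rw [Nat.Prime.dvd_mul (by norm_num)]
    rintro (h | h)
    · have := (by norm_num : Nat.Prime 7).dvd_of_dvd_pow h
      omega
    · omega
  have hM : (7 ^ (2 * β + 1) * (5 ^ (2 * α) * (8 * (7 * n + k) + 7))) % 8 = 1 := by
    have h5 : 5 ^ (2 * α) % 8 = 1 := by
      rw [pow_mul, Nat.pow_mod]; norm_num
    have h7 : 7 ^ (2 * β + 1) % 8 = 7 := by
      rw [pow_succ, pow_mul, Nat.mul_mod, Nat.pow_mod]; norm_num
    rw [Nat.mul_mod, Nat.mul_mod (5 ^ (2 * α)), h5, h7]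
    omega
  have hdiv := Nat.div_add_mod (7 ^ (2 * β + 1) * (5 ^ (2 * α) * (8 * (7 * n + k) + 7))) 8
  rw [hM] at hdiv
  set r := 7 ^ (2 * β + 1) * (5 ^ (2 * α) * (8 * (7 * n + k) + 7)) / 8
  have e : 5 ^ (2 * α) * 7 ^ (2 * β + 1) * (16 * (7 * n + k) + 14) = 16 * r + 2 := by
    calc _ = 2 * (7 ^ (2 * β + 1) * (5 ^ (2 * α) * (8 * (7 * n + k) + 7))) := by ring
      _ = 16 * r + 2 := by rw [← hdiv]; ring
  rw [e]
  have := ROP.key2 r (fun c hc x w => by rw [hdiv]; exact ROP.no_rep c hc _ ht β x w)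
  exact_mod_cast this
end

section
/- For all integers n ≥ 0 and every t ∈ {6, 10, 14}, the number of (4,8)-regular overpartitions satisfies p̄_{4,8}(16n + t) ≡ 0 (mod 32). -/
open PowerSeries Finset

def gB {R : Type*} [CommRing R] (q : R) (n : ℕ) : R := ∏ k ∈ range n, (1 + q ^ (k+1))
def gC {R : Type*} [CommRing R] (q : R) (m n : ℕ) : R := ∏ k ∈ Ico m n, (1 - q ^ (k+1))
def gv {R : Type*} [CommRing R] (q : R) (n s : ℕ) : R :=
  2 * (-1)^(s+1) * q^((s+1)*(n+1)) * gB q s * gC q (s+1) n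
def gS {R : Type*} [CommRing R] (q : R) (n : ℕ) : R :=
  1 + ∑ j ∈ range n, 2 * (-1)^(j+1) * q^((j+1)^2)

theorem gC_top {R : Type*} [CommRing R] (q : R) {m n : ℕ} (h : m ≤ n) :
    gC q m (n+1) = gC q m n * (1 - q^(n+1)) := by
  unfold gC; rw [Finset.prod_Ico_succ_top h]
theorem gC_bot {R : Type*} [CommRing R] (q : R) {m n : ℕ} (h : m < n) :
    gC q m n = (1 - q^(m+1)) * gC q (m+1) n := by
  unfold gC; rw [Finset.prod_eq_prod_Ico_succ_bot h]
theorem gB_succ {R : Type*} [CommRing R] (q : R) (n : ℕ) :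
    gB q (n+1) = gB q n * (1 + q^(n+1)) := by
  unfold gB; rw [Finset.prod_range_succ]

theorem g_tele {R : Type*} [CommRing R] (q : R) (n j : ℕ) (h : j ≤ n) :
    gC q 0 (n+1) - (1 + q^(n+1)) * gC q 0 n +
      ∑ s ∈ range j, (gv q (n+1) s - (1 + q^(n+1)) * gv q n s)
    = 2 * (-1)^(j+1) * q^((j+1)*(n+1)) * gC q j n * gB q j := by
  induction j with
  | zero => rw [gC_top q (Nat.zero_le n)]; simp [gB]; ring
  | succ j ih =>
    rw [sum_range_succ, ← add_assoc, ih (by omega)]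
    unfold gv
    rw [gC_bot q (show j < n by omega), gC_top q (show j+1 ≤ n from h), gB_succ]
    ring

theorem g_main {R : Type*} [CommRing R] (q : R) (n : ℕ) :
    gS q n * gB q n = gC q 0 n + ∑ s ∈ range n, gv q n s := by
  induction n with
  | zero => simp [gS, gB, gC]
  | succ n ih =>
    have h := g_tele q n n le_rfl
    have h1 : gS q (n+1) = gS q n + 2 * (-1)^(n+1) * q^((n+1)^2) := by
      unfold gS; rw [sum_range_succ]; ring
    rw [sum_sub_distrib, ← mul_sum] at h
    have h2 : gv q (n+1) n = 2 * (-1)^(n+1) * q^((n+1)*(n+2)) * gB q n := by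
      simp [gv, gC]
    have h3 : gC q n n = 1 := by simp [gC]
    rw [sum_range_succ, h1, gB_succ, h2]
    rw [h3] at h
    linear_combination (1 + q^(n+1)) * ih - h

theorem g_dvd {R : Type*} [CommRing R] (q : R) (n : ℕ) :
    q^(n+1) ∣ gS q n * gB q n - gC q 0 n := by
  rw [g_main, add_sub_cancel_left]
  refine Finset.dvd_sum fun s _ => ?_
  unfold gv
  refine Dvd.dvd.mul_right (Dvd.dvd.mul_right (Dvd.dvd.mul_left (pow_dvd_pow q ?_) _) _) _
  nlinarith

section
open scoped PowerSeries.WithPiTopology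

noncomputable def Qf (e : ℤ) (p : ℕ → Bool) (k : ℕ) : ℤ⟦X⟧ :=
  if p (k+1) then 1 + C e * X^(k+1) else 1
noncomputable def Q (e : ℤ) (p : ℕ → Bool) : ℤ⟦X⟧ := ∏' k, Qf e p k

theorem hQ (e : ℤ) (p : ℕ → Bool) : HasProd (Qf e p) (Q e p) := by
  have h : Multipliable (fun k => (1 : ℤ⟦X⟧) + (if p (k+1) then C e * X^(k+1) else 0)) := by
    apply PowerSeries.WithPiTopology.multipliable_one_add_of_tendsto_order_atTop_nhds_top
    refine ENat.tendsto_nhds_top_iff_natCast_lt.mpr (fun n ↦ Filter.eventually_atTop.mpr ⟨n, ?_⟩)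
    intro m hm
    split_ifs
    · grw [← le_order_mul]
      refine lt_add_of_nonneg_of_lt (by simp) ?_
      rw [order_X_pow]
      norm_cast
      omega
    · simp
  have h2 : Qf e p = (fun k => (1 : ℤ⟦X⟧) + (if p (k+1) then C e * X^(k+1) else 0)) := by
    funext k; unfold Qf; split_ifs <;> simp
  unfold Q
  rw [h2]
  exact h.hasProd

theorem Q_eq {f : ℕ → ℤ⟦X⟧} {e : ℤ} {p : ℕ → Bool} {a : ℤ⟦X⟧} (h : HasProd f a)
    (hf : ∀ k, f k = Qf e p k) : a = Q e p := by
  have : f = Qf e p := funext hf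
  subst this
  exact h.unique (hQ e p)

theorem Q_mul (e : ℤ) (p p' r : ℕ → Bool) (h1 : ∀ k, r k = (p k || p' k))
    (h2 : ∀ k, (p k && p' k) = false) : Q e p * Q e p' = Q e r := by
  refine Q_eq ((hQ e p).mul (hQ e p')) fun k => ?_
  have h1 := h1 (k+1)
  have h2 := h2 (k+1)
  unfold Qf
  cases hp : p (k+1) <;> cases hp' : p' (k+1) <;> simp_all

theorem cont_coeffwise (f : ℤ⟦X⟧ → ℤ⟦X⟧) (h : ∀ n, ∃ m c, ∀ a, coeff n (f a) = c * coeff m a) :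
    Continuous f := by
  rw [continuous_iff_continuousAt]
  intro a
  rw [ContinuousAt, PowerSeries.WithPiTopology.tendsto_iff_coeff_tendsto]
  intro n
  obtain ⟨m, c, hm⟩ := h n
  simp_rw [hm]
  exact ((PowerSeries.WithPiTopology.continuous_coeff ℤ m).tendsto a).const_mul c

theorem cont_expand (m : ℕ) (hm : m ≠ 0) : Continuous (expand m hm : ℤ⟦X⟧ →ₐ[ℤ] ℤ⟦X⟧) := by
  refine cont_coeffwise _ fun n => ?_
  by_cases h : m ∣ n
  · exact ⟨n / m, 1, fun a => by simp [coeff_expand, h]⟩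
  · exact ⟨0, 0, fun a => by simp [coeff_expand, h]⟩

theorem cont_rescale : Continuous (rescale (-1 : ℤ)) := by
  refine cont_coeffwise _ fun n => ⟨n, (-1)^n, fun a => by simp [coeff_rescale]⟩

theorem Q_expand (e : ℤ) (m : ℕ) (hm : m ≠ 0) :
    expand m hm (Q e (fun _ => true)) = Q e (fun k => decide (m ∣ k)) := by
  have h := (hQ e (fun _ => true)).map (expand m hm) (cont_expand m hm)
  refine (HasProd.unique ?_ (hQ e (fun k => decide (m ∣ k)))) 
  have hinj : Function.Injective (fun k : ℕ => m * (k+1) - 1) := by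
    intro a b hab
    have h1 : 0 < m * (a+1) := by positivity
    have h2 : 0 < m * (b+1) := by positivity
    have : m * (a+1) = m * (b+1) := by simp only at hab; omega
    have := Nat.eq_of_mul_eq_mul_left (Nat.pos_of_ne_zero hm) this
    omega
  rw [← hinj.hasProd_iff]
  · convert h using 1
    funext k
    have h1 : 0 < m * (k+1) := by positivity
    have h2 : m * (k+1) - 1 + 1 = m * (k+1) := by omega
    simp [Qf, h2, pow_mul]
  · intro x hx
    unfold Qf
    rw [if_neg]
    simp only [decide_eq_true_eq]
    rintro ⟨c, hc⟩
    apply hx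
    obtain _ | c := c
    · simp at hc
    · exact ⟨c, by simp only; omega⟩

theorem Q_rescale_odd (e : ℤ) :
    rescale (-1 : ℤ) (Q e (fun k => decide (k % 2 = 1))) = Q (-e) (fun k => decide (k % 2 = 1)) := by
  refine Q_eq ((hQ e _).map (rescale (-1 : ℤ)) cont_rescale) fun k => ?_
  unfold Qf
  by_cases h : (k+1) % 2 = 1
  · have : Odd (k+1) := Nat.odd_iff.2 h
    simp [h, this.neg_pow]
  · simp [h]

theorem Q_rescale_even (e : ℤ) :
    rescale (-1 : ℤ) (Q e (fun k => decide (2 ∣ k))) = Q e (fun k => decide (2 ∣ k)) := by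
  refine Q_eq ((hQ e _).map (rescale (-1 : ℤ)) cont_rescale) fun k => ?_
  unfold Qf
  by_cases h : 2 ∣ (k+1)
  · have : Even (k+1) := even_iff_two_dvd.2 h
    simp [h, this.neg_pow]
  · simp [h]

theorem Q_ne (e : ℤ) (p : ℕ → Bool) : Q e p ≠ 0 := by
  have h := (hQ e p).map (constantCoeff (R := ℤ)) (PowerSeries.WithPiTopology.continuous_constantCoeff ℤ)
  have h2 : (constantCoeff (R := ℤ)) ∘ Qf e p = fun _ => 1 := by
    funext k; simp only [Function.comp, Qf]; split_ifs <;> simp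
  rw [h2] at h
  have := h.unique hasProd_one
  intro h0
  simp [h0] at this

-- partitions
theorem dist_gf (p : ℕ → Bool) :
    PowerSeries.mk (fun n => (((Nat.Partition.distincts n).filter
      (fun lam => ∀ i ∈ lam.parts, p i = true)).card : ℤ)) = Q 1 p := by
  have h := Nat.Partition.hasProd_genFun (fun i c ↦ if p i ∧ c < 2 then (1 : ℤ) else 0)
  have h2 : Nat.Partition.genFun (fun i c ↦ if p i ∧ c < 2 then (1 : ℤ) else 0) =
     PowerSeries.mk (fun n => (((Nat.Partition.distincts n).filter
      (fun lam => ∀ i ∈ lam.parts, p i = true)).card : ℤ)) := by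
    simp_rw [Nat.Partition.genFun, ← Nat.Partition.countRestricted_two,
      Nat.Partition.countRestricted, filter_filter, card_filter, Finsupp.prod, prod_boole]
    ext n
    simp only [coeff_mk]
    push_cast
    refine sum_congr rfl fun x _ => ?_
    congr 1
    simp
    grind
  rw [← h2]
  refine Q_eq h fun k => ?_
  rw [tsum_eq_single 0]
  · unfold Qf
    rw [smul_eq_C_mul]
    split_ifs <;> simp_all
  · intro j hj
    rw [if_neg (by omega), smul_eq_C_mul]; simp

theorem restr_gf (p : ℕ → Bool) :
    PowerSeries.mk (fun n => (((Finset.univ : Finset (Nat.Partition n)).filter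
      (fun mu => ∀ i ∈ mu.parts, p i = true)).card : ℤ)) * Q (-1) p = 1 := by
  have h := (Nat.Partition.hasProd_powerSeriesMk_card_restricted ℤ (fun i => p i = true)).mul
    (hQ (-1) p)
  refine h.unique ?_
  convert hasProd_one with k
  unfold Qf
  split_ifs
  · simp_rw [pow_mul]
    rw [show (1 : ℤ⟦X⟧) + C (-1) * X^(k+1) = 1 - X^(k+1) by simp; ring]
    exact PowerSeries.WithPiTopology.tsum_pow_mul_one_sub_of_constantCoeff_eq_zero (by simp)
  · simp
end

noncomputable def phi : ℤ⟦X⟧ :=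
  PowerSeries.mk fun n => if n = 0 then 1 else if IsSquare n then 2 else 0
noncomputable def psi : ℤ⟦X⟧ :=
  PowerSeries.mk fun n => if IsSquare (8 * n + 1) then 1 else 0
noncomputable def theta : ℤ⟦X⟧ :=
  PowerSeries.mk fun n => if n = 0 then 0 else if IsSquare n then 1 else 0
noncomputable def nphi : ℤ⟦X⟧ := rescale (-1 : ℤ) phi

theorem phi_theta : phi = 1 + 2 * theta := by
  ext n
  rw [show (2 : ℤ⟦X⟧) = C 2 by simp, map_add, coeff_C_mul]
  simp only [phi, theta, coeff_mk, coeff_one]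
  split_ifs <;> simp

theorem nphi_theta : nphi = 1 + 2 * rescale (-1 : ℤ) theta := by
  rw [nphi, phi_theta, map_add, map_mul, map_one, map_ofNat]

theorem coeff_gS (d n : ℕ) (h : d ≤ n) : coeff d (gS (X : ℤ⟦X⟧) n) = coeff d nphi := by
  have h1 : ∀ j : ℕ, (2 * (-1)^(j+1) * X^((j+1)^2) : ℤ⟦X⟧) = C (2 * (-1)^(j+1)) * X^((j+1)^2) := by
    intro j; simp
  unfold gS
  simp_rw [h1]
  rw [map_add, map_sum]
  simp only [coeff_C_mul, coeff_X_pow, nphi, phi, coeff_rescale, coeff_mk, coeff_one]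
  by_cases hd : d = 0
  · subst hd
    rw [Finset.sum_eq_zero]
    · simp
    · intro j _
      rw [if_neg (by positivity), mul_zero]
  · rw [if_neg hd, if_neg hd, zero_add]
    split_ifs with hs
    · obtain ⟨r, hr⟩ := hs
      obtain _ | r := r
      · simp at hr; omega
      · rw [Finset.sum_eq_single r]
        · rw [if_pos (by rw [hr]; ring), hr, pow_mul]
          rcases neg_one_pow_eq_or ℤ (r+1) with h | h <;> rw [h]
          · simp
          · rcases Nat.even_or_odd (r+1) with h' | h'
            · rw [h'.neg_one_pow] at h; norm_num at h
            · rw [h'.neg_one_pow]; norm_num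
        · intro b _ hb
          rw [if_neg, mul_zero]
          intro h'
          apply hb
          have : (b+1)^2 = (r+1)^2 := by rw [← h', hr]; ring
          have := Nat.pow_left_injective (n := 2) (by norm_num) this
          omega
        · intro hr'
          exfalso
          apply hr'
          rw [mem_range]
          nlinarith
    · rw [mul_zero]
      refine Finset.sum_eq_zero fun j _ => ?_
      rw [if_neg, mul_zero]
      intro h'
      exact hs ⟨j+1, by rw [h']; ring⟩

section
open scoped PowerSeries.WithPiTopology
theorem gauss : nphi * Q 1 (fun _ => true) = Q (-1) (fun _ => true) := by
  have hB := (hQ 1 (fun _ => true)).tendsto_prod_nat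
  have hA := (hQ (-1) (fun _ => true)).tendsto_prod_nat
  have hS : Filter.Tendsto (fun n => gS (X : ℤ⟦X⟧) n) Filter.atTop (nhds nphi) := by
    rw [PowerSeries.WithPiTopology.tendsto_iff_coeff_tendsto]
    intro d
    exact tendsto_atTop_of_eventually_const (i₀ := d) fun n hn => coeff_gS d n hn
  have h := (hS.mul hB).sub hA
  rw [← sub_eq_zero]
  refine tendsto_nhds_unique h ?_
  rw [PowerSeries.WithPiTopology.tendsto_iff_coeff_tendsto]
  intro d
  refine tendsto_atTop_of_eventually_const (i₀ := d) fun n hn => ?_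
  have h2 := g_dvd (X : ℤ⟦X⟧) n
  rw [X_pow_dvd_iff] at h2
  rw [map_zero, ← h2 d (by omega)]
  have e1 : ∏ k ∈ range n, Qf 1 (fun _ => true) k = gB (X : ℤ⟦X⟧) n := by
    unfold gB
    refine Finset.prod_congr rfl fun k _ => ?_
    simp [Qf]
  have e2 : ∏ k ∈ range n, Qf (-1) (fun _ => true) k = gC (X : ℤ⟦X⟧) 0 n := by
    unfold gC
    rw [Finset.range_eq_Ico]
    refine Finset.prod_congr rfl fun k _ => ?_
    simp [Qf]; ring
  rw [e1, e2]
end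

theorem phi_nphi : phi * nphi = (expand 2 two_ne_zero nphi)^2 := by
  have hs : ∀ e, Q e (fun k => decide (k % 2 = 1)) * Q e (fun k => decide (2 ∣ k)) = Q e (fun _ => true) := by
    intro e
    apply Q_mul
    · intro k; rcases Nat.mod_two_eq_zero_or_one k with h | h <;> simp [Nat.dvd_iff_mod_eq_zero, h]
    · intro k; rcases Nat.mod_two_eq_zero_or_one k with h | h <;> simp [Nat.dvd_iff_mod_eq_zero, h]
  have g1 := gauss
  have g2 := congrArg (expand 2 two_ne_zero) gauss
  rw [map_mul, Q_expand, Q_expand] at g2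
  have g3 := congrArg (rescale (-1 : ℤ)) gauss
  rw [← hs, ← hs, map_mul, map_mul, map_mul, Q_rescale_odd, Q_rescale_even, Q_rescale_odd,
    Q_rescale_even] at g3
  have hh : rescale (-1 : ℤ) nphi = phi := by
    rw [nphi, rescale_rescale]; simp
  rw [hh, neg_neg] at g3
  rw [← hs, ← hs] at g1
  have n1 := Q_ne 1 (fun k => decide (k % 2 = 1))
  have n2 := Q_ne (-1) (fun k => decide (k % 2 = 1))
  have n3 := Q_ne 1 (fun k => decide (2 ∣ k))
  generalize Q 1 (fun k => decide (k % 2 = 1)) = a at *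
  generalize Q (-1) (fun k => decide (k % 2 = 1)) = b at *
  generalize Q 1 (fun k => decide (2 ∣ k)) = c at *
  generalize Q (-1) (fun k => decide (2 ∣ k)) = d at *
  generalize expand 2 two_ne_zero nphi = N2 at *
  have hne : a * b * c^2 ≠ 0 := by positivity
  apply mul_right_cancel₀ hne
  calc phi * nphi * (a * b * c^2) = (phi * (b * c)) * (nphi * (a * c)) := by ring
    _ = a * b * d ^ 2 := by rw [g3, g1]; ring
    _ = _ := by rw [← g2]; ring

def reg : ℕ → Bool := fun i => decide (i % 8 ≠ 4)

noncomputable def PP : ℤ⟦X⟧ := PowerSeries.mk fun n => (regularOverpartitions 4 8 n : ℤ)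

theorem PP_gf : PP * Q (-1) reg = Q 1 reg := by
  have h : PP = PowerSeries.mk (fun n => (((Nat.Partition.distincts n).filter
      (fun lam => ∀ i ∈ lam.parts, reg i = true)).card : ℤ)) *
      PowerSeries.mk (fun n => (((Finset.univ : Finset (Nat.Partition n)).filter
      (fun mu => ∀ i ∈ mu.parts, reg i = true)).card : ℤ)) := by
    ext n
    rw [coeff_mul, Finset.Nat.sum_antidiagonal_eq_sum_range_succ_mk]
    simp [PP, regularOverpartitions, reg]
  rw [h, mul_assoc, restr_gf, mul_one, dist_gf]

theorem PP_phi : PP * nphi * expand 8 (by norm_num) nphi = expand 4 (by norm_num) nphi := by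
  have hs : ∀ e, Q e reg * Q e (fun k => decide (k % 8 = 4)) = Q e (fun _ => true) := by
    intro e
    apply Q_mul
    · intro k; by_cases h : k % 8 = 4 <;> simp [reg, h]
    · intro k; by_cases h : k % 8 = 4 <;> simp [reg, h]
  have hs2 : ∀ e, Q e (fun k => decide (k % 8 = 4)) * Q e (fun k => decide (8 ∣ k))
      = Q e (fun k => decide (4 ∣ k)) := by
    intro e
    apply Q_mul
    · intro k; simp only [← Bool.decide_or]; congr 1; simp; omega
    · intro k; simp only [← Bool.decide_and, decide_eq_false_iff_not]; omega
  have g1 := gauss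
  have g4 := congrArg (expand 4 (by norm_num)) gauss
  have g8 := congrArg (expand 8 (by norm_num)) gauss
  rw [map_mul, Q_expand, Q_expand] at g4 g8
  rw [← hs, ← hs] at g1
  rw [← hs2, ← hs2] at g4
  have gp := PP_gf
  have n1 := Q_ne (-1) reg
  have n2 := Q_ne 1 (fun k => decide (k % 8 = 4))
  have n3 := Q_ne 1 (fun k => decide (8 ∣ k))
  generalize Q 1 reg = a at *
  generalize Q (-1) reg = a' at *
  generalize Q 1 (fun k => decide (k % 8 = 4)) = b at *
  generalize Q (-1) (fun k => decide (k % 8 = 4)) = b' at *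
  generalize Q 1 (fun k => decide (8 ∣ k)) = c at *
  generalize Q (-1) (fun k => decide (8 ∣ k)) = c' at *
  generalize expand 8 _ nphi = N8 at *
  generalize expand 4 _ nphi = N4 at *
  have hne : a' * b * c ≠ 0 := by positivity
  apply mul_right_cancel₀ hne
  calc PP * nphi * N8 * (a' * b * c) = (PP * a') * nphi * b * (N8 * c) := by ring
    _ = (nphi * (a * b)) * c' := by rw [gp, g8]; ring
    _ = a' * (b' * c') := by rw [g1]; ring
    _ = _ := by rw [← g4]; ring

theorem sq_mod (n : ℕ) (h : IsSquare n) : n % 8 = 1 ∨ n % 4 = 0 := by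
  obtain ⟨r, rfl⟩ := h
  have : r % 8 < 8 := Nat.mod_lt _ (by norm_num)
  rw [Nat.mul_mod, show r * r % 4 = (r % 8) * (r % 8) % 4 by
    rw [Nat.mul_mod, ← Nat.mod_mod_of_dvd r (show 4 ∣ 8 by norm_num), ← Nat.mul_mod]]
  interval_cases r % 8 <;> simp

theorem sq_four (n : ℕ) : IsSquare (4 * n) ↔ IsSquare n := by
  constructor
  · rintro ⟨r, hr⟩
    have : 2 ∣ r := by
      have : 2 ∣ r * r := ⟨2 * n, by omega⟩
      rcases (Nat.prime_two.dvd_mul).1 this with h | h <;> exact h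
    obtain ⟨s, rfl⟩ := this
    exact ⟨s, by nlinarith⟩
  · rintro ⟨r, rfl⟩
    exact ⟨2 * r, by ring⟩

theorem phi_dissect : phi = expand 4 (by norm_num) phi + 2 * (X * expand 8 (by norm_num) psi) := by
  ext n
  rw [show (2 : ℤ⟦X⟧) = C 2 by simp, map_add, coeff_C_mul]
  obtain _ | n := n
  · simp [coeff_expand, phi, coeff_zero_X_mul]
  rw [coeff_succ_X_mul, coeff_expand, coeff_expand]
  simp only [phi, psi, coeff_mk]
  rw [if_neg (Nat.succ_ne_zero n)]
  by_cases h4 : 4 ∣ n + 1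
  · have h8 : ¬ 8 ∣ n := by omega
    obtain ⟨m, hm⟩ := h4
    rw [hm, if_neg h8]
    have : m ≠ 0 := by omega
    simp [this, sq_four]
  · rw [if_neg h4]
    by_cases h8 : 8 ∣ n
    · obtain ⟨m, rfl⟩ := h8
      simp
    · rw [if_neg h8, if_neg]
      · simp
      · intro h
        have := sq_mod _ h
        omega

theorem ee (a b c : ℕ) (ha : a ≠ 0) (hb : b ≠ 0) (hc : c ≠ 0) (h : c = a * b) (f : ℤ⟦X⟧) :
    expand c hc f = expand a ha (expand b hb f) := by
  subst h
  exact expand_mul a ha b hb f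

theorem alg_key {P N N2 N4 N8 F F2 F4 : ℤ⟦X⟧} (hne : N4 ≠ 0) (h0 : P * N * N8 = N4)
    (h1 : F * N = N2^2) (h2 : F2 * N2 = N4^2) (h4 : F4 * N4 = N8^2) :
    P * N8^7 = F * F2^2 * F4^3 := by
  have h : P * N4^3 * N8 = F * F2^2 := by
    apply mul_right_cancel₀ hne
    calc P * N4^3 * N8 * N4 = P * N8 * (N4^2)^2 := by ring
      _ = P * N8 * N2^2 * F2^2 := by rw [← h2]; ring
      _ = (P * N * N8) * F * F2^2 := by rw [← h1]; ring
      _ = _ := by rw [h0]; ring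
  calc P * N8^7 = P * N8 * (N8^2)^3 := by ring
    _ = (P * N4^3 * N8) * F4^3 := by rw [← h4]; ring
    _ = _ := by rw [h]

theorem pow4 (a : ℤ⟦X⟧) : ∃ b, (1 + 2 * a)^4 = 1 + 8 * b := ⟨a + 3*a^2+4*a^3+2*a^4, by ring⟩
theorem pow16 (b : ℤ⟦X⟧) : ∃ c, (1 + 8 * b)^4 = 1 + 32 * c :=
  ⟨b + 12*b^2+64*b^3+128*b^4, by ring⟩

theorem alg_final {P N8 N16 F F2 F4 F8 s8 s16 a b c : ℤ⟦X⟧} (h : P * N8^7 = F * F2^2 * F4^3)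
    (d1 : F = F4 + 2 * (X * s8)) (d2 : F2 = F8 + 2 * (X^2 * s16))
    (h8 : F8 * N8 = N16^2) (hF : F4^4 = 1 + 8 * a) (hN : N8^4 = 1 + 8 * b)
    (hc : (1 + 8 * b)^4 = 1 + 32 * c) :
    ∃ T, P = F4^4 * (F8^2 + 4 * (X^4 * s16^2)) * N8^9 + X * (2 * s8 * F2^2 * F4^3 * N8^9)
      + X^2 * (4 * N16^2 * s16) + 32 * T := by
  have e : P * (1 + 32 * c) = F * F2^2 * F4^3 * N8^9 := by
    rw [← hc, ← hN]; linear_combination N8^9 * h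
  have e2 : F * F2^2 * F4^3 * N8^9 = F4^4 * (F8^2 + 4 * (X^4 * s16^2)) * N8^9
      + X * (2 * s8 * F2^2 * F4^3 * N8^9) + X^2 * (4 * (F4^4 * (N8^4)^2 * (F8 * N8)) * s16) := by
    have : F * F2^2 = F4 * F2^2 + 2 * (X * s8) * F2^2 := by rw [d1]; ring
    have h2 : F2^2 = (F8 + 2 * (X^2 * s16))^2 := by rw [d2]
    linear_combination F4^3 * N8^9 * this + F4^4 * N8^9 * h2
  rw [e2, h8, hF, hN] at e
  rw [hF]
  refine ⟨-c * P + X^2 * N16^2 * s16 * (a + (1 + 8 * a) * (2 * b + 8 * b^2)), ?_⟩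
  linear_combination e

theorem final_identity : ∃ E O R T : ℤ⟦X⟧, PP = expand 4 (by norm_num) E +
    X * expand 2 two_ne_zero O + X^2 * expand 16 (by norm_num) R + 32 * T := by
  have hne : expand 4 (by norm_num) nphi ≠ 0 := by
    intro h
    have := congrArg (constantCoeff (R := ℤ)) h
    rw [constantCoeff_expand, ← coeff_zero_eq_constantCoeff_apply] at this
    simp only [nphi, phi, coeff_rescale, coeff_mk] at this
    simp at this
  have h1 := phi_nphi
  have h2 := congrArg (expand 2 two_ne_zero) phi_nphi
  have h4 := congrArg (expand 4 (by norm_num)) phi_nphi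
  have h8 := congrArg (expand 8 (by norm_num)) phi_nphi
  rw [map_mul, map_pow, ← ee 2 2 4 (by norm_num) (by norm_num) (by norm_num) rfl] at h2
  rw [map_mul, map_pow, ← ee 4 2 8 (by norm_num) (by norm_num) (by norm_num) rfl] at h4
  rw [map_mul, map_pow, ← ee 8 2 16 (by norm_num) (by norm_num) (by norm_num) rfl] at h8
  have d1 := phi_dissect
  have d2 := congrArg (expand 2 two_ne_zero) phi_dissect
  rw [map_add, map_mul, map_mul, map_ofNat, expand_X,
    ← ee 2 4 8 (by norm_num) (by norm_num) (by norm_num) rfl,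
    ← ee 2 8 16 (by norm_num) (by norm_num) (by norm_num) rfl] at d2
  obtain ⟨a, ha⟩ := pow4 theta
  obtain ⟨b, hb⟩ := pow4 (rescale (-1 : ℤ) theta)
  rw [← phi_theta] at ha
  rw [← nphi_theta] at hb
  have ha' := congrArg (expand 4 (by norm_num)) ha
  have hb' := congrArg (expand 8 (by norm_num)) hb
  rw [map_pow, map_add, map_one, map_mul, map_ofNat] at ha' hb'
  obtain ⟨c, hc⟩ := pow16 (expand 8 (by norm_num) b)
  obtain ⟨T, hT⟩ := alg_final (alg_key hne PP_phi h1 h2 h4) d1 d2 h8 ha' hb' hc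
  refine ⟨phi^4 * ((expand 2 two_ne_zero phi)^2 + 4 * (X * (expand 4 (by norm_num) psi)^2)) *
      (expand 2 two_ne_zero nphi)^9,
    2 * expand 4 (by norm_num) psi * phi^2 * (expand 2 two_ne_zero phi)^3 *
      (expand 4 (by norm_num) nphi)^9,
    4 * nphi^2 * psi, T, ?_⟩
  rw [hT]
  simp only [map_add, map_mul, map_pow, map_ofNat, expand_X,
    ← ee 4 2 8 (by norm_num) (by norm_num) (by norm_num) rfl,
    ← ee 2 4 8 (by norm_num) (by norm_num) (by norm_num) rfl,
    ← ee 2 2 4 (by norm_num) (by norm_num) (by norm_num) rfl,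
    ← ee 4 4 16 (by norm_num) (by norm_num) (by norm_num) rfl]

theorem stmt_2 (n : ℕ) (t : ℕ) (ht : t ∈ ({6, 10, 14} : Finset ℕ)) :
    32 ∣ regularOverpartitions 4 8 (16 * n + t) := by
  obtain ⟨E, O, R, T, h⟩ := final_identity
  have h2 := congrArg (coeff (16 * n + t)) h
  have ht' : t = 6 ∨ t = 10 ∨ t = 14 := by simpa using ht
  obtain ⟨u, hu⟩ : ∃ u, 16 * n + t = u + 2 := ⟨16 * n + t - 2, by omega⟩
  rw [map_add, map_add, map_add, coeff_expand_of_not_dvd 4 _ _ (by omega), hu,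
    show u + 2 = (u + 1) + 1 from rfl, coeff_succ_X_mul, coeff_expand_of_not_dvd 2 _ _ (by omega),
    show u + 1 + 1 = u + 2 from rfl, coeff_X_pow_mul, coeff_expand_of_not_dvd 16 _ _ (by omega),
    show (32 : ℤ⟦X⟧) = C 32 by simp, coeff_C_mul, ← hu, PP, coeff_mk] at h2
  have : ((32 : ℕ) : ℤ) ∣ (regularOverpartitions 4 8 (16 * n + t) : ℤ) := by
    rw [h2]; exact ⟨coeff (16 * n + t) T, by simp⟩
  exact_mod_cast this
end

section
/- For all integers n ≥ 0, α ≥ 0, β ≥ 0, γ ≥ 0, setting N = 3^{4α} · 5^{4β} · 7^{4γ}, the number of (4,8)-regular overpartitions satisfies p̄_{4,8}(16·N·n + 2·N) ≡ 4·T(n) (mod 32), where T(n) = (−1)^m (2m+1) if n = m(m+1)/2 for some integer m ≥ 0, and T(n) = 0 if n is not a triangular number. (Equivalently, ∑_{n≥0} p̄_{4,8}(16·N·n + 2·N) q^n ≡ 4 (q;q)_∞^3 (mod 32), using Jacobi's identity (q;q)_∞^3 = ∑_{m≥0} (−1)^m (2m+1) q^{m(m+1)/2}.) -/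
open Classical in
/-- The coefficient of `q^n` in Jacobi's expansion of `(q;q)_∞^3`:
`T n = (-1)^m * (2m+1)` if `n = m(m+1)/2` for some `m ≥ 0`, and `0` otherwise. -/
noncomputable def jacobiCoeff (n : ℕ) : ℤ :=
  if h : ∃ m : ℕ, 2 * n = m * (m + 1) then
    (-1) ^ h.choose * (2 * (h.choose : ℤ) + 1)
  else 0

namespace RO
open PowerSeries Finset

/-- Gaussian binomials. -/
def gb {A : Type*} [CommRing A] (q : A) : ℕ → ℕ → A
  | _, 0 => 1
  | 0, _ + 1 => 0
  | n + 1, k + 1 => gb q n k + q ^ (k + 1) * gb q n (k + 1)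

def qf {A : Type*} [CommRing A] (q : A) (n : ℕ) : A := ∏ i ∈ range n, (1 - q ^ (i + 1))

def te {A : Type*} [CommRing A] (q u w : A) : ℤ → A
  | Int.ofNat a => u ^ a * q ^ (a.choose 2)
  | Int.negSucc b => w ^ (b + 1) * q ^ ((b + 1).choose 2)

section
variable {A : Type*} [CommRing A] (q u w : A)

lemma gb_zero_right (n : ℕ) : gb q n 0 = 1 := by cases n <;> rfl

lemma gb_succ (n k : ℕ) : gb q (n + 1) (k + 1) = gb q n k + q ^ (k + 1) * gb q n (k + 1) := rfl

lemma gb_gt : ∀ n k : ℕ, n < k → gb q n k = 0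
  | _, 0, h => by omega
  | 0, k + 1, _ => rfl
  | n + 1, k + 1, h => by
    rw [gb_succ, gb_gt n k (by omega), gb_gt n (k + 1) (by omega)]; simp

lemma qf_succ (n : ℕ) : qf q (n + 1) = qf q n * (1 - q ^ (n + 1)) := by
  rw [qf, prod_range_succ]; rfl

lemma gb_mul : ∀ a b : ℕ, gb q (a + b) a * qf q a * qf q b = qf q (a + b)
  | 0, b => by simp [gb_zero_right, qf]
  | a + 1, 0 => by
    have h := gb_mul a 0
    simp only [add_zero] at h ⊢
    rw [gb_succ, gb_gt q a (a + 1) (by omega), qf_succ]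
    linear_combination (1 - q ^ (a + 1)) * h
  | a + 1, b + 1 => by
    have h1 := gb_mul a (b + 1)
    have h2 := gb_mul (a + 1) b
    have e1 : a + 1 + (b + 1) = (a + (b + 1)) + 1 := by ring
    rw [e1, gb_succ, qf_succ q (a + (b+1))]
    have e2 : a + 1 + b = a + (b + 1) := by ring
    rw [e2] at h2
    rw [qf_succ q a] at h2 ⊢
    rw [qf_succ q b] at h1 ⊢
    linear_combination (1 - q ^ (a+1)) * h1 + q ^ (a + 1) * (1 - q ^ (b+1)) * h2
termination_by a b => a + b

lemma te_rec (huw : u * w = q) (m j : ℕ) :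
    te q u w ((j : ℤ) - m) * w * q ^ m = te q u w ((j : ℤ) - (m + 1 : ℕ)) * q ^ j := by
  rcases lt_or_ge m j with h | h
  · obtain ⟨a, rfl⟩ : ∃ a, j = m + 1 + a := ⟨j - (m+1), by omega⟩
    have e1 : ((m + 1 + a : ℕ) : ℤ) - m = Int.ofNat (a + 1) := by push_cast; simp; ring
    have e2 : ((m + 1 + a : ℕ) : ℤ) - (m + 1 : ℕ) = Int.ofNat a := by push_cast; simp
    rw [e1, e2]
    simp only [te]
    rw [Nat.choose_succ_succ' a 1, Nat.choose_one_right]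
    have : u ^ (a+1) * q ^ (a + a.choose (1+1)) * w * q ^ m
      = (u * w) * (u ^ a * q ^ (a + a.choose 2) * q ^ m) := by ring
    rw [this, huw]; ring
  · obtain ⟨b, rfl⟩ : ∃ b, m = j + b := ⟨m - j, by omega⟩
    have e2 : (j : ℤ) - (j + b + 1 : ℕ) = Int.negSucc b := by
      rw [Int.negSucc_eq]; push_cast; ring
    rw [e2]
    rcases b with _ | b
    · have e1 : (j : ℤ) - (j + 0 : ℕ) = Int.ofNat 0 := by simp
      rw [e1]; simp [te]
    · have e1 : (j : ℤ) - (j + (b + 1) : ℕ) = Int.negSucc b := by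
        rw [Int.negSucc_eq]; push_cast; ring
      rw [e1]; simp only [te]
      rw [Nat.choose_succ_succ' (b+1) 1, Nat.choose_one_right]
      ring

lemma qbinom : ∀ n : ℕ, ∀ u : A, ∏ i ∈ range n, (1 + u * q ^ i)
    = ∑ j ∈ range (n + 1), u ^ j * q ^ (j.choose 2) * gb q n j
  | 0, u => by simp [gb]
  | n + 1, u => by
    rw [prod_range_succ']
    have : ∏ k ∈ range n, (1 + u * q ^ (k + 1)) = ∏ k ∈ range n, (1 + (u * q) * q ^ k) :=
      prod_congr rfl fun k _ => by ring
    have h0 := sum_range_succ' (fun j => u ^ j * q ^ (j.choose 2) * gb q (n + 1) j) (n + 1)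
    rw [this, qbinom n (u * q), h0]
    have h2 : ∀ j, (u * q) ^ j * q ^ (j.choose 2) * gb q n j
        = u ^ j * q ^ (j + j.choose 2) * gb q n j := fun j => by ring
    simp only [h2, gb_succ]
    simp only [mul_add, sum_add_distrib]
    rw [pow_zero, mul_one, mul_one]
    have h3 := sum_range_succ' (fun j => u ^ j * q ^ (j + j.choose 2) * gb q n j) (n+1)
    have h4 := sum_range_succ (fun j => u ^ j * q ^ (j + j.choose 2) * gb q n j) (n+1)
    rw [gb_gt q n (n+1) (by omega)] at h4
    have h5 : ∑ x ∈ range (n + 1), u ^ (x + 1) * q ^ ((x + 1).choose 2) * gb q n x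
        = (∑ j ∈ range (n + 1), u ^ j * q ^ (j + j.choose 2) * gb q n j) * u := by
      rw [sum_mul]; refine sum_congr rfl fun j _ => ?_
      rw [Nat.choose_succ_succ' j 1, Nat.choose_one_right]; ring
    have h6 : ∑ x ∈ range (n + 1), u ^ (x + 1) * q ^ ((x + 1).choose 2) * (q ^ (x + 1) * gb q n (x + 1))
        = ∑ j ∈ range (n + 1), u ^ (j + 1) * q ^ (j + 1 + (j + 1).choose 2) * gb q n (j + 1) :=
      sum_congr rfl fun j _ => by ring
    rw [h5, h6]
    simp only [gb_zero_right, Nat.choose_zero_succ, pow_zero] at h3 ⊢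
    simp at h3 h4 ⊢
    linear_combination h3 - h4

lemma jtp_fin (huw : u * w = q) (n : ℕ) : ∀ m : ℕ,
    (∏ i ∈ range n, (1 + u * q ^ i)) * ∏ i ∈ range m, (1 + w * q ^ i)
    = ∑ j ∈ range (n + m + 1), te q u w ((j : ℤ) - m) * gb q (n + m) j
  | 0 => by
    simp only [range_zero, prod_empty, mul_one, add_zero, Nat.cast_zero, sub_zero]
    rw [qbinom]; rfl
  | m + 1 => by
    rw [prod_range_succ, ← mul_assoc, jtp_fin huw n m]
    have h := sum_range_succ' (fun j : ℕ => te q u w ((j : ℤ) - (m+1 : ℕ)) * gb q (n + (m+1)) j) (n + m + 1)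
    rw [← add_assoc] at h ⊢
    rw [h]
    simp only [gb_succ, gb_zero_right]
    simp only [mul_add, sum_add_distrib, mul_one]
    have e : ∀ x : ℕ, ((x + 1 : ℕ) : ℤ) - (m + 1 : ℕ) = (x : ℤ) - m := fun x => by push_cast; ring
    have h5 : ∑ x ∈ range (n + m + 1), te q u w (((x + 1 : ℕ) : ℤ) - (m + 1 : ℕ)) * gb q (n + m) x
       = ∑ x ∈ range (n + m + 1), te q u w ((x : ℤ) - m) * gb q (n + m) x :=
      sum_congr rfl fun x _ => by rw [e]
    rw [h5]
    have h6 := sum_range_succ' (fun j : ℕ => te q u w ((j : ℤ) - (m+1 : ℕ)) * (q ^ j * gb q (n + m) j)) (n + m + 1)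
    have h7 := sum_range_succ (fun j : ℕ => te q u w ((j : ℤ) - (m+1 : ℕ)) * (q ^ j * gb q (n + m) j)) (n + m + 1)
    rw [gb_gt q (n+m) (n+m+1) (by omega)] at h7
    have h8 : (∑ j ∈ range (n + m + 1), te q u w ((j : ℤ) - m) * gb q (n + m) j) * (w * q ^ m)
       = ∑ j ∈ range (n + m + 1), te q u w ((j : ℤ) - (m+1 : ℕ)) * (q ^ j * gb q (n + m) j) := by
      rw [sum_mul]; refine sum_congr rfl fun j _ => ?_
      have := te_rec q u w huw m j
      linear_combination gb q (n+m) j * this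
    rw [h8]
    simp only [gb_zero_right, pow_zero, mul_one, mul_zero, add_zero] at h6 h7
    linear_combination h6 - h7

lemma te_sum (n : ℕ) : ∑ j ∈ range (n + n + 1), te q u w ((j : ℤ) - n)
    = 1 + ∑ i ∈ range n, (u ^ (i + 1) * q ^ ((i + 1).choose 2) + w ^ (i + 1) * q ^ ((i + 1).choose 2)) := by
  rw [add_assoc, sum_range_add, sum_add_distrib, ← sum_range_reflect, sum_range_succ']
  have h1 : ∀ j ∈ range n, te q u w (((n - 1 - j : ℕ) : ℤ) - n) = w ^ (j+1) * q ^ ((j + 1).choose 2) := by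
    intro j hj
    have := mem_range.1 hj
    have e : ((n - 1 - j : ℕ) : ℤ) - n = Int.negSucc j := by rw [Int.negSucc_eq]; omega
    rw [e]; rfl
  rw [sum_congr rfl h1]
  have h2 : ∀ j ∈ range n, te q u w (((n + (j + 1) : ℕ) : ℤ) - n) = u ^ (j+1) * q ^ ((j + 1).choose 2) := by
    intro j hj
    have e : ((n + (j + 1) : ℕ) : ℤ) - n = Int.ofNat (j + 1) := by push_cast; simp
    rw [e]; rfl
  rw [sum_congr rfl h2]
  have e : ((n + 0 : ℕ) : ℤ) - n = Int.ofNat 0 := by simp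
  rw [e]; simp [te]; ring

lemma te_dvd (k : ℤ) : q ^ (k.natAbs.choose 2) ∣ te q u w k := by
  cases k with
  | ofNat a => exact Dvd.intro_left _ rfl
  | negSucc b => exact Dvd.intro_left _ rfl

lemma qf_cong (a b : ℕ) (h : a ≤ b) : q ^ (a + 1) ∣ qf q b - qf q a := by
  induction b, h using Nat.le_induction with
  | base => simp
  | succ b hb ih =>
    rw [qf_succ]
    have : q ^ (a+1) ∣ q ^ (b + 1) := pow_dvd_pow _ (by omega)
    have e : qf q b * (1 - q ^ (b + 1)) - qf q a = (qf q b - qf q a) - qf q b * q ^ (b+1) := by ring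
    rw [e]; exact dvd_sub ih (Dvd.dvd.mul_left this _)

lemma gb_cong (hu : ∀ n, IsUnit (qf q n)) (j n a b : ℕ) (ha : j ≤ a) (hb : j ≤ b) (hn : j ≤ n) :
    q ^ (j + 1) ∣ gb q (a + b) a * qf q n - 1 := by
  have h := gb_mul q a b
  obtain ⟨x, hx⟩ := qf_cong q j a ha
  obtain ⟨y, hy⟩ := qf_cong q j b hb
  obtain ⟨z, hz⟩ := qf_cong q j (a + b) (by omega)
  obtain ⟨t, ht⟩ := qf_cong q j n hn
  have : q ^ (j + 1) ∣ qf q j * (gb q (a + b) a * qf q n - 1) := by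
    have hx' : qf q a = qf q j + q ^ (j+1) * x := by rw [← hx]; ring
    have hy' : qf q b = qf q j + q ^ (j+1) * y := by rw [← hy]; ring
    have hz' : qf q (a+b) = qf q j + q ^ (j+1) * z := by rw [← hz]; ring
    have ht' : qf q n = qf q j + q ^ (j+1) * t := by rw [← ht]; ring
    rw [hx', hy', hz'] at h
    rw [ht']
    generalize q ^ (j+1) = Q at *
    refine ⟨gb q (a+b) a * qf q j * t + z - gb q (a+b) a * (qf q j * x + qf q j * y + Q * x * y) , ?_⟩
    linear_combination h
  exact ((hu j).dvd_mul_left).1 this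

lemma choose_two_ge (b : ℕ) : b ≤ b.choose 2 + 1 := by
  rcases b with _ | b
  · simp
  · rw [Nat.choose_succ_succ' b 1, Nat.choose_one_right]; omega

lemma jtp_cong (hu : ∀ n, IsUnit (qf q n)) (huw : u * w = q) (n : ℕ) :
    q ^ n ∣ (1 + ∑ i ∈ range n, (u ^ (i + 1) * q ^ ((i + 1).choose 2) + w ^ (i + 1) * q ^ ((i + 1).choose 2)))
      - (∏ i ∈ range n, (1 + u * q ^ i)) * (∏ i ∈ range n, (1 + w * q ^ i)) * qf q n := by
  rw [← te_sum, jtp_fin q u w huw n n, sum_mul, ← sum_sub_distrib]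
  refine dvd_sum fun j hj => ?_
  have hj := mem_range.1 hj
  set k : ℤ := (j : ℤ) - n with hk
  have h1 := te_dvd q u w k
  have h2 := gb_cong q hu (n - k.natAbs) n j (n + n - j) (by omega) (by omega) (by omega)
  rw [show j + (n + n - j) = n + n by omega] at h2
  have h3 := mul_dvd_mul h1 h2
  rw [← pow_add] at h3
  have h4 := choose_two_ge k.natAbs
  have h5 : q ^ n ∣ te q u w k * (gb q (n + n) j * qf q n - 1) :=
    (pow_dvd_pow _ (by omega)).trans h3
  have e : te q u w k - te q u w k * gb q (n + n) j * qf q n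
    = - (te q u w k * (gb q (n + n) j * qf q n - 1)) := by ring
  rw [e]; exact (dvd_neg).2 h5
end
end RO

namespace RO
open PowerSeries Finset

def Lim {R : Type*} [CommRing R] (a : ℕ → R⟦X⟧) (L : R⟦X⟧) : Prop :=
  ∀ n : ℕ, ∃ N : ℕ, ∀ m ≥ N, (X : R⟦X⟧) ^ n ∣ L - a m

section
variable {R S : Type*} [CommRing R] [CommRing S]

lemma Lim.mul {a b : ℕ → R⟦X⟧} {L M : R⟦X⟧} (ha : Lim a L) (hb : Lim b M) :
    Lim (fun n => a n * b n) (L * M) := fun n => by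
  obtain ⟨N, hN⟩ := ha n
  obtain ⟨K, hK⟩ := hb n
  refine ⟨max N K, fun m hm => ?_⟩
  have h1 := hN m (le_trans (le_max_left _ _) hm)
  have h2 := hK m (le_trans (le_max_right _ _) hm)
  have e : L * M - a m * b m = (L - a m) * M + a m * (M - b m) := by ring
  rw [e]; exact dvd_add (h1.mul_right _) (h2.mul_left _)

lemma Lim.add {a b : ℕ → R⟦X⟧} {L M : R⟦X⟧} (ha : Lim a L) (hb : Lim b M) :
    Lim (fun n => a n + b n) (L + M) := fun n => by
  obtain ⟨N, hN⟩ := ha n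
  obtain ⟨K, hK⟩ := hb n
  refine ⟨max N K, fun m hm => ?_⟩
  have h1 := hN m (le_trans (le_max_left _ _) hm)
  have h2 := hK m (le_trans (le_max_right _ _) hm)
  have e : L + M - (a m + b m) = (L - a m) + (M - b m) := by ring
  rw [e]; exact dvd_add h1 h2

lemma Lim.const (L : R⟦X⟧) : Lim (fun _ => L) L := fun n => ⟨0, fun m _ => by simp⟩

lemma Lim.comp {a : ℕ → R⟦X⟧} {L : R⟦X⟧} (ha : Lim a L) (f : ℕ → ℕ) (hf : ∀ m, m ≤ f m) :
    Lim (fun n => a (f n)) L := fun n => by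
  obtain ⟨N, hN⟩ := ha n
  exact ⟨N, fun m hm => hN _ (le_trans hm (hf m))⟩

lemma Lim.congr {a b : ℕ → R⟦X⟧} {L : R⟦X⟧} (ha : Lim a L)
    (h : ∀ n, (X : R⟦X⟧) ^ n ∣ a n - b n) : Lim b L := fun n => by
  obtain ⟨N, hN⟩ := ha n
  refine ⟨max N n, fun m hm => ?_⟩
  have h1 := hN m (le_trans (le_max_left _ _) hm)
  have h2 := (pow_dvd_pow X (le_trans (le_max_right _ _) hm)).trans (h m)
  have e : L - b m = (L - a m) + (a m - b m) := by ring
  rw [e]; exact dvd_add h1 h2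

lemma Lim.congr' {a b : ℕ → R⟦X⟧} {L : R⟦X⟧} (ha : Lim a L)
    (h : ∀ n, a n = b n) : Lim b L := ha.congr fun n => by simp [h]

lemma eq_zero_of_dvd {L : R⟦X⟧} (h : ∀ n : ℕ, (X : R⟦X⟧) ^ n ∣ L) : L = 0 := by
  ext n
  have := X_pow_dvd_iff.1 (h (n+1)) n (by omega)
  simpa using this

lemma Lim.unique {a : ℕ → R⟦X⟧} {L M : R⟦X⟧} (ha : Lim a L) (hb : Lim a M) : L = M := by
  rw [← sub_eq_zero]
  refine eq_zero_of_dvd fun n => ?_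
  obtain ⟨N, hN⟩ := ha n
  obtain ⟨K, hK⟩ := hb n
  have h1 := hN (max N K) (le_max_left _ _)
  have h2 := hK (max N K) (le_max_right _ _)
  have e : L - M = (L - a (max N K)) - (M - a (max N K)) := by ring
  rw [e]; exact dvd_sub h1 h2

lemma Lim.map {a : ℕ → R⟦X⟧} {L : R⟦X⟧} (ha : Lim a L) (σ : R⟦X⟧ →+* S⟦X⟧)
    (hσ : (X : S⟦X⟧) ∣ σ X) : Lim (fun n => σ (a n)) (σ L) := fun n => by
  obtain ⟨N, hN⟩ := ha n
  refine ⟨N, fun m hm => ?_⟩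
  have := map_dvd σ (hN m hm)
  rw [map_pow, map_sub] at this
  exact (pow_dvd_pow_of_dvd hσ n).trans this

lemma cong_le {a : ℕ → R⟦X⟧} (h : ∀ n, (X : R⟦X⟧) ^ n ∣ a (n + 1) - a n) (n m : ℕ) (hm : n ≤ m) :
    (X : R⟦X⟧) ^ n ∣ a m - a n := by
  induction m, hm using Nat.le_induction with
  | base => simp
  | succ m hm ih =>
    have e : a (m + 1) - a n = (a (m+1) - a m) + (a m - a n) := by ring
    rw [e]; exact dvd_add ((pow_dvd_pow X hm).trans (h m)) ih

lemma lim_exists (a : ℕ → R⟦X⟧) (h : ∀ n, (X : R⟦X⟧) ^ n ∣ a (n + 1) - a n) : ∃ L, Lim a L := by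
  refine ⟨PowerSeries.mk fun n => coeff n (a (n + 1)), fun n => ⟨n, fun m hm => ?_⟩⟩
  rw [X_pow_dvd_iff]
  intro k hk
  rw [map_sub, coeff_mk]
  have := X_pow_dvd_iff.1 (cong_le h (k+1) m (by omega)) k (by omega)
  rw [map_sub] at this
  rw [← neg_sub, this, neg_zero]

lemma qf_unit (q : R⟦X⟧) (hq : X ∣ q) (n : ℕ) : IsUnit (qf q n) := by
  rw [isUnit_iff_constantCoeff, qf, map_prod]
  rw [X_dvd_iff] at hq
  simp [hq]

lemma jtp_lim (q u w : R⟦X⟧) (hq : X ∣ q) (huw : u * w = q) {L : R⟦X⟧}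
    (h : Lim (fun n => 1 + ∑ i ∈ range n, (u ^ (i + 1) * q ^ ((i + 1).choose 2)
        + w ^ (i + 1) * q ^ ((i + 1).choose 2))) L) :
    Lim (fun n => (∏ i ∈ range n, (1 + u * q ^ i)) * (∏ i ∈ range n, (1 + w * q ^ i)) * qf q n) L :=
  h.congr fun n => (pow_dvd_pow_of_dvd hq n).trans (jtp_cong q u w (qf_unit q hq) huw n)
end

lemma two_choose (i : ℕ) : 2 * (i + 1).choose 2 = (i + 1) * i := by
  induction i with
  | zero => rfl
  | succ i ih => rw [Nat.choose_succ_succ' (i+1) 1, Nat.choose_one_right, mul_add, ih]; ring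

lemma choose_ge (i : ℕ) : i ≤ (i + 1).choose 2 := by
  have := choose_two_ge (i+1); omega

noncomputable section
def Fn (n : ℕ) : ℤ⟦X⟧ := qf X n
def Bn (n : ℕ) : ℤ⟦X⟧ := ∏ i ∈ range n, (1 + X ^ (i + 1))
def On (n : ℕ) : ℤ⟦X⟧ := ∏ i ∈ range n, (1 - X ^ (2 * i + 1))
def sm (n : ℕ) : ℤ⟦X⟧ := 1 + 2 * ∑ i ∈ range n, (-1) ^ (i + 1) * X ^ ((i + 1) ^ 2)
def sp (n : ℕ) : ℤ⟦X⟧ := 1 + 2 * ∑ i ∈ range n, X ^ ((i + 1) ^ 2)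
def ps (n : ℕ) : ℤ⟦X⟧ := ∑ i ∈ range n, X ^ ((i + 1).choose 2)
def Jn (n : ℕ) : ℤ⟦X⟧ := ∑ i ∈ range n, (-1) ^ i * (2 * (i : ℤ⟦X⟧) + 1) * X ^ ((i + 1).choose 2)

lemma pdvd {n m : ℕ} (h : n ≤ m) (a : ℤ⟦X⟧) : (X : ℤ⟦X⟧) ^ n ∣ a * X ^ m :=
  (pow_dvd_pow X h).mul_left a

lemma Fex : ∃ L, Lim Fn L := lim_exists _ fun n => by
  have e : Fn (n + 1) - Fn n = (- Fn n) * X ^ (n + 1) := by rw [Fn, qf_succ, Fn]; ring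
  rw [e]; exact pdvd (by omega) _
lemma Bex : ∃ L, Lim Bn L := lim_exists _ fun n => by
  have e : Bn (n + 1) - Bn n = (Bn n) * X ^ (n + 1) := by rw [Bn, prod_range_succ, Bn]; ring
  rw [e]; exact pdvd (by omega) _
lemma Oex : ∃ L, Lim On L := lim_exists _ fun n => by
  have e : On (n + 1) - On n = (- On n) * X ^ (2 * n + 1) := by rw [On, prod_range_succ, On]; ring
  rw [e]; exact pdvd (by omega) _
lemma smex : ∃ L, Lim sm L := lim_exists _ fun n => by
  have e : sm (n + 1) - sm n = (2 * (-1) ^ (n + 1)) * X ^ ((n + 1) ^ 2) := by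
    rw [sm, sum_range_succ, sm]; ring
  rw [e]; exact pdvd (by nlinarith) _
lemma spex : ∃ L, Lim sp L := lim_exists _ fun n => by
  have e : sp (n + 1) - sp n = 2 * X ^ ((n + 1) ^ 2) := by
    rw [sp, sum_range_succ, sp]; ring
  rw [e]; exact pdvd (by nlinarith) _
lemma psex : ∃ L, Lim ps L := lim_exists _ fun n => by
  have e : ps (n + 1) - ps n = 1 * X ^ ((n + 1).choose 2) := by
    rw [ps, sum_range_succ, ps]; ring
  rw [e]; exact pdvd (choose_ge n) _
lemma Jex : ∃ L, Lim Jn L := lim_exists _ fun n => by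
  have e : Jn (n + 1) - Jn n = ((-1) ^ n * (2 * (n : ℤ⟦X⟧) + 1)) * X ^ ((n + 1).choose 2) := by
    rw [Jn, sum_range_succ, Jn]; ring
  rw [e]; exact pdvd (choose_ge n) _

def F : ℤ⟦X⟧ := Classical.choose Fex
def B : ℤ⟦X⟧ := Classical.choose Bex
def O : ℤ⟦X⟧ := Classical.choose Oex
def phm : ℤ⟦X⟧ := Classical.choose smex
def php : ℤ⟦X⟧ := Classical.choose spex
def psi : ℤ⟦X⟧ := Classical.choose psex
def J : ℤ⟦X⟧ := Classical.choose Jex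
lemma hF : Lim Fn F := Classical.choose_spec Fex
lemma hB : Lim Bn B := Classical.choose_spec Bex
lemma hO : Lim On O := Classical.choose_spec Oex
lemma hphm : Lim sm phm := Classical.choose_spec smex
lemma hphp : Lim sp php := Classical.choose_spec spex
lemma hpsi : Lim ps psi := Classical.choose_spec psex
lemma hJ : Lim Jn J := Classical.choose_spec Jex

/-- substitution `X ↦ X^(d+1)` -/
def ex (d : ℕ) : ℤ⟦X⟧ →+* ℤ⟦X⟧ := (PowerSeries.expand (R := ℤ) (d + 1) (by omega)).toRingHom

lemma ex_X (d : ℕ) : ex d X = X ^ (d + 1) := by simp [ex]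
lemma coeff_ex (d n : ℕ) (f : ℤ⟦X⟧) :
    coeff n (ex d f) = if d + 1 ∣ n then coeff (n / (d + 1)) f else 0 := by
  simp [ex, coeff_expand]
lemma ex_ex (d e k : ℕ) (h : (d + 1) * (e + 1) = k + 1) (f : ℤ⟦X⟧) : ex d (ex e f) = ex k f := by
  obtain rfl : k = (d + 1) * (e + 1) - 1 := by omega
  ext n
  simp only [coeff_ex]
  rw [← h]
  by_cases h1 : (d + 1) ∣ n
  · obtain ⟨m, rfl⟩ := h1
    simp [Nat.mul_dvd_mul_iff_left, Nat.mul_div_mul_left]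
  · have : ¬ (d + 1) * (e + 1) ∣ n := fun h => h1 ((Dvd.intro _ rfl).trans h)
    simp [h1, this]
lemma Lim.ex {a : ℕ → ℤ⟦X⟧} {L : ℤ⟦X⟧} (ha : Lim a L) (d : ℕ) :
    Lim (fun n => RO.ex d (a n)) (RO.ex d L) :=
  ha.map _ (by rw [ex_X]; exact dvd_pow_self _ (by omega))

lemma ex_Fn (d n : ℕ) : ex d (Fn n) = qf (X ^ (d + 1)) n := by
  simp [Fn, qf, map_prod, ex_X]

/- neg substitution -/
def sg : ℤ⟦X⟧ →+* ℤ⟦X⟧ := evalNegHom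
lemma sg_X : sg X = -X := evalNegHom_X
lemma Lim.sg {a : ℕ → ℤ⟦X⟧} {L : ℤ⟦X⟧} (ha : Lim a L) :
    Lim (fun n => RO.sg (a n)) (RO.sg L) :=
  ha.map _ (by rw [sg_X]; simp)

lemma phm_eq : phm = O ^ 2 * ex 1 F := by
  have h := jtp_lim (X ^ 2 : ℤ⟦X⟧) (-X) (-X) (dvd_pow_self _ (by omega)) (by ring) (L := phm) (by
    refine hphm.congr' fun n => ?_
    rw [sm, mul_sum]
    congr 1
    refine sum_congr rfl fun i _ => ?_
    rw [← pow_mul, two_choose, neg_pow]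
    ring)
  refine h.unique (((hO.mul hO).mul (hF.ex 1)).congr' fun n => ?_ ) |>.trans (by ring)
  rw [ex_Fn]
  have : On n = ∏ i ∈ range n, (1 + -X * (X ^ 2) ^ i) :=
    prod_congr rfl fun i _ => by ring
  rw [this]

lemma BF : B * F = ex 1 F := by
  refine (hB.mul hF).unique ((hF.ex 1).congr' fun n => ?_)
  rw [ex_Fn, Fn, Bn, qf, qf, ← prod_mul_distrib]
  exact prod_congr rfl fun i _ => by ring

lemma OF : O * ex 1 F = F := by
  refine (hO.mul (hF.ex 1)).unique ((hF.comp (fun n => 2 * n) (by intro m; omega)).congr' fun n => ?_)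
  rw [ex_Fn]
  induction n with
  | zero => simp [On, Fn, qf]
  | succ n ih =>
    have e : 2 * (n + 1) = 2 * n + 1 + 1 := by ring
    beta_reduce at ih ⊢
    rw [e, Fn, qf_succ, qf_succ, qf_succ, On, prod_range_succ]
    change Fn (2 * n) * _ * _ = On n * _ * _
    rw [ih]; ring

lemma F0 : constantCoeff F = 1 := by
  obtain ⟨N, hN⟩ := hF 1
  have := X_pow_dvd_iff.1 (hN N le_rfl) 0 (by omega)
  rw [map_sub, sub_eq_zero] at this
  simp only [coeff_zero_eq_constantCoeff] at this
  rw [this, Fn, qf, map_prod]; simp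

lemma ne0 {f : ℤ⟦X⟧} (h : constantCoeff f = 1) : f ≠ 0 := by
  rintro rfl; simp at h

lemma OB : O * B = 1 := by
  have h : F * (O * B) = F * 1 := by
    linear_combination OF + O * BF
  exact mul_left_cancel₀ (ne0 F0) h

lemma phmB : phm * B = F := by
  rw [phm_eq]
  linear_combination O * ex 1 F * OB + OF

lemma psi_eq : psi = B ^ 2 * F := by
  have h := jtp_lim (X : ℤ⟦X⟧) X 1 dvd_rfl (by ring) (L := psi + psi) (by
    refine (hpsi.add (hpsi.comp (fun n => n + 1) (by intro m; omega))).congr' fun n => ?_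
    beta_reduce
    rw [ps, ps, sum_range_succ', sum_add_distrib]
    have : ∀ i : ℕ, (X : ℤ⟦X⟧) ^ ((i + 1 + 1).choose 2) = X ^ (i + 1) * X ^ ((i + 1).choose 2) := by
      intro i; rw [Nat.choose_succ_succ' (i+1) 1, Nat.choose_one_right, pow_add]
    simp only [this, one_pow, one_mul]
    simp; ring)
  have h1 := h.comp (fun n => n + 1) (by intro m; omega)
  have h2 := ((hB.comp (fun n => n + 1) (by intro m; omega)).mul ((Lim.const 2).mul hB)).mul
    (hF.comp (fun n => n + 1) (by intro m; omega))
  have := h1.unique (h2.congr' fun n => ?_)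
  · have h3 : 2 * psi = 2 * (B ^ 2 * F) := by linear_combination this
    refine mul_left_cancel₀ (fun h => ?_) h3
    have := congrArg constantCoeff h
    rw [map_ofNat, map_zero] at this
    norm_num at this
  · have e1 : Bn (n + 1) = ∏ i ∈ range (n + 1), (1 + (X : ℤ⟦X⟧) * X ^ i) :=
      prod_congr rfl fun i _ => by ring
    have e2 : 2 * Bn n = ∏ i ∈ range (n + 1), (1 + (1 : ℤ⟦X⟧) * X ^ i) := by
      rw [prod_range_succ', Bn]; simp only [one_mul, pow_zero]; ring
    beta_reduce
    rw [e1, e2]; rfl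

lemma phipsi : phm ^ 2 * psi = F ^ 3 := by
  rw [psi_eq, ← phmB]; ring

end
end RO

namespace RO
open PowerSeries Finset
noncomputable section

lemma pow9 {A : Type*} [CommRing A] (h : (64 : A) = 0) (n : ℕ) : (9 : A) ^ n = 1 + 8 * n := by
  induction n with
  | zero => simp
  | succ n ih => rw [pow_succ, ih]; push_cast; linear_combination (n : A) * h
lemma pow57 {A : Type*} [CommRing A] (h : (64 : A) = 0) (n : ℕ) : (57 : A) ^ n = 1 - 8 * n := by
  induction n with
  | zero => simp
  | succ n ih => rw [pow_succ, ih]; push_cast; linear_combination (1 - 7 * (n : A)) * h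

def pm : ℤ⟦X⟧ →+* (ZMod 64)⟦X⟧ := PowerSeries.map (Int.castRingHom (ZMod 64))
lemma pm_X : pm X = X := by simp [pm]
lemma Lim.pm {a : ℕ → ℤ⟦X⟧} {L : ℤ⟦X⟧} (ha : Lim a L) :
    Lim (fun n => RO.pm (a n)) (RO.pm L) :=
  ha.map _ (by rw [pm_X])

lemma h64 : (64 : (ZMod 64)⟦X⟧) = 0 := by
  have : (64 : ZMod 64) = 0 := by decide
  have h := congrArg (C (R := ZMod 64)) this
  rwa [map_ofNat, map_zero] at h

lemma eight_prod (c : (ZMod 64)⟦X⟧) (hc : 8 * c = -8) (n : ℕ) :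
    8 * ∏ i ∈ range n, (1 + c * X ^ (i + 1)) = 8 * qf X n := by
  induction n with
  | zero => simp [qf]
  | succ n ih =>
    rw [prod_range_succ, qf_succ]
    linear_combination (1 + c * X ^ (n + 1)) * ih + qf X n * X ^ (n+1) * hc

lemma J_eq : 8 * pm J = 8 * pm F ^ 3 := by
  have h := jtp_lim (X : (ZMod 64)⟦X⟧) (-9 * X) (-57) dvd_rfl (by linear_combination 8 * X * h64)
    (L := 8 * pm J) (by
    refine ((Lim.const 8).mul hJ.pm).congr fun n => ?_
    have key : 1 + ∑ i ∈ range n, ((-9 * X) ^ (i + 1) * X ^ ((i + 1).choose 2)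
        + (-57) ^ (i + 1) * X ^ ((i + 1).choose 2))
        = 8 * pm (Jn n) + (-9) ^ n * (X : (ZMod 64)⟦X⟧) ^ ((n + 1).choose 2) := by
      induction n with
      | zero => simp [Jn]
      | succ n ih =>
        have hJs : Jn (n + 1) = Jn n + (-1) ^ n * (2 * (n : ℤ⟦X⟧) + 1) * X ^ ((n + 1).choose 2) := by
          rw [Jn, sum_range_succ]; rfl
        rw [sum_range_succ, ← add_assoc, ih, hJs, map_add]
        have e1 : pm ((-1) ^ n * (2 * (n : ℤ⟦X⟧) + 1) * X ^ ((n + 1).choose 2))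
          = (-1) ^ n * (2 * (n : (ZMod 64)⟦X⟧) + 1) * X ^ ((n + 1).choose 2) := by
          simp only [map_mul, map_add, map_pow, map_neg, map_one, map_ofNat, map_natCast, pm_X]
        rw [e1, Nat.choose_succ_succ' (n+1) 1, Nat.choose_one_right, pow_add X (n+1)]
        have a1 := pow9 h64 n
        have a2 := pow57 h64 (n+1)
        have b1 : (-9 : (ZMod 64)⟦X⟧) ^ n = (-1) ^ n * 9 ^ n := by rw [neg_pow]
        have b2 : (-57 : (ZMod 64)⟦X⟧) ^ (n+1) = (-1) ^ n * (- 57 ^ (n+1)) := by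
          rw [neg_pow]; ring
        have b3 : (-9 * X : (ZMod 64)⟦X⟧) ^ (n+1) = (-9) ^ (n+1) * X ^ (n+1) := by rw [mul_pow]
        rw [b2, b1, b3, a1, a2]
        push_cast
        ring
    rw [key]
    have e : ∀ a b : (ZMod 64)⟦X⟧, a - (a + b) = -b := fun a b => by ring
    rw [e, dvd_neg]
    exact (pow_dvd_pow X (choose_ge n)).mul_left _)
  have h1 := h.comp (fun n => n + 1) (by intro m; omega)
  have h2 := ((Lim.const 8).mul (hF.pm.comp (fun n => n + 1) (by intro m; omega))).mul
    (hF.pm.mul (hF.pm.comp (fun n => n + 1) (by intro m; omega)))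
  have := h1.unique (h2.congr' fun n => ?_)
  · rw [this]; ring
  · have hq : ∀ n, pm (Fn n) = qf X n := fun n => by
      simp [Fn, qf, map_prod, pm_X]
    simp only [hq]
    rw [prod_range_succ' (fun i => 1 + -57 * (X : (ZMod 64)⟦X⟧) ^ i)]
    have e1 : ∏ i ∈ range (n + 1), (1 + -9 * X * X ^ i)
      = ∏ i ∈ range (n + 1), (1 + -9 * (X : (ZMod 64)⟦X⟧) ^ (i + 1)) :=
      prod_congr rfl fun i _ => by ring
    rw [e1, pow_zero]
    have c1 := eight_prod (-9) (by linear_combination -h64) (n+1)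
    have c2 := eight_prod (-57) (by linear_combination -7 * h64) n
    have c3 : (1 + -57 * 1 : (ZMod 64)⟦X⟧) = 8 := by linear_combination -h64
    rw [c3]
    linear_combination -(qf X n * qf X (n+1)) * c1 - (∏ i ∈ range (n + 1), (1 + -9 * (X : (ZMod 64)⟦X⟧) ^ (i + 1))) * qf X (n+1) * c2

lemma J_coeff (n : ℕ) : (8 : ℤ) ∣ coeff n J - coeff n (F ^ 3) := by
  have h := congrArg (coeff n) J_eq
  rw [← map_pow] at h
  have h8 : (8 : (ZMod 64)⟦X⟧) = C (8 : ZMod 64) := by rw [map_ofNat]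
  rw [h8, coeff_C_mul, coeff_C_mul, pm, coeff_map, coeff_map] at h
  have h' : ((8 * coeff n J - 8 * coeff n (F ^ 3) : ℤ) : ZMod 64) = 0 := by
    push_cast; rw [sub_eq_zero]; exact h
  rw [ZMod.intCast_zmod_eq_zero_iff_dvd] at h'
  push_cast at h'
  omega

lemma J_val (n : ℕ) : coeff n J = jacobiCoeff n := by
  obtain ⟨N, hN⟩ := hJ (n + 1)
  set M := max N (n + 1) with hM
  have h := X_pow_dvd_iff.1 (hN M (le_max_left _ _)) n (by omega)
  rw [map_sub, sub_eq_zero] at h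
  rw [h, Jn, map_sum]
  have hc : ∀ i : ℕ, coeff n ((-1) ^ i * (2 * (i : ℤ⟦X⟧) + 1) * X ^ ((i + 1).choose 2))
      = if 2 * n = i * (i + 1) then (-1) ^ i * (2 * (i : ℤ) + 1) else 0 := by
    intro i
    have : ((-1) ^ i * (2 * (i : ℤ⟦X⟧) + 1)) = C ((-1) ^ i * (2 * (i : ℤ) + 1)) := by
      simp only [map_mul, map_add, map_pow, map_neg, map_one, map_ofNat, map_natCast]
    rw [this, coeff_C_mul, coeff_X_pow]
    have h2 := two_choose i
    by_cases hh : n = (i + 1).choose 2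
    · rw [if_pos hh, if_pos (by rw [hh, h2]; ring), mul_one]
    · rw [if_neg hh, if_neg (by intro h3; apply hh; rw [mul_comm i] at h3; omega), mul_zero]
  simp only [hc]
  have huniq : ∀ a b : ℕ, a * (a + 1) = b * (b + 1) → a = b := by
    intro a b hab
    rcases lt_trichotomy a b with h | h | h
    · nlinarith
    · exact h
    · nlinarith
  unfold jacobiCoeff
  split_ifs with hex
  · set m := hex.choose with hm
    have hs : 2 * n = m * (m + 1) := hex.choose_spec
    rw [sum_eq_single m]
    · rw [if_pos hs]
    · intro b _ hb
      rw [if_neg]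
      intro h3; exact hb (huniq _ _ (by rw [← h3, hs]))
    · intro hmr
      exfalso; apply hmr
      rw [mem_range]
      have : m ≤ n := by
        rcases m with _ | m
        · omega
        · nlinarith
      have := le_max_right N (n+1)
      omega
  · refine sum_eq_zero fun i _ => ?_
    rw [if_neg]; intro h; exact hex ⟨i, h⟩

lemma phm_sg : sg phm = php := by
  refine hphm.sg.unique (hphp.congr' fun n => ?_)
  simp only [sm, sp, map_add, map_mul, map_sum, map_pow, map_neg, map_one, map_ofNat, sg_X]
  congr 2
  refine sum_congr rfl fun i _ => ?_
  rw [neg_pow X, ← mul_assoc, ← pow_add]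
  rw [Even.neg_one_pow, one_mul]
  rw [show i + 1 + (i + 1) ^ 2 = (i + 1) * (i + 1 + 1) by ring]
  exact Nat.even_mul_succ_self _

lemma sg_ex1 : sg (ex 1 F) = ex 1 F := by
  refine (hF.ex 1).sg.unique ((hF.ex 1).congr' fun n => ?_)
  rw [ex_Fn, qf, map_prod]
  refine prod_congr rfl fun i _ => ?_
  simp [sg_X]

lemma OsO : O * sg O = ex 1 O := by
  refine (hO.mul hO.sg).unique ((hO.ex 1).congr' fun n => ?_)
  rw [On, map_prod, map_prod, ← prod_mul_distrib]
  refine prod_congr rfl fun i _ => ?_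
  simp only [map_sub, map_one, map_pow, sg_X, ex_X]
  rw [Odd.neg_pow ⟨i, rfl⟩]; ring

lemma phipm : php * phm = ex 1 phm ^ 2 := by
  have h1 := congrArg sg phm_eq
  rw [map_mul, map_pow, phm_sg, sg_ex1] at h1
  have h2 := congrArg (ex 1) OF
  rw [map_mul] at h2
  have h3 := congrArg (ex 1) phm_eq
  rw [map_mul, map_pow] at h3
  rw [h3, h1, phm_eq]
  have : sg O ^ 2 * ex 1 F * (O ^ 2 * ex 1 F) = (O * sg O) ^ 2 * ex 1 F ^ 2 := by ring
  rw [this, OsO]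
  linear_combination -(ex 1 O ^ 2 * (ex 1 O * ex 1 (ex 1 F) + ex 1 F)) * h2

lemma dissect : php = ex 3 php + 2 * X * ex 7 psi := by
  refine (hphp.comp (fun n => 2 * n) (by intro m; omega)).unique
    (((hphp.ex 3).add ((Lim.const (2 * X)).mul (hpsi.ex 7))).congr' fun n => ?_)
  simp only [sp, ps, map_add, map_mul, map_sum, map_pow, map_one, map_ofNat, ex_X]
  induction n with
  | zero => simp
  | succ n ih =>
    rw [show 2 * (n + 1) = 2 * n + 1 + 1 by ring]
    simp only [sum_range_succ]
    have h2 := two_choose n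
    have e : (2 * n + 1) ^ 2 = 1 + 8 * (n + 1).choose 2 := by
      rw [show 8 * (n+1).choose 2 = 4 * (2 * (n + 1).choose 2) by ring, h2]; ring
    rw [e, pow_add X 1, show 2 * n + 1 + 1 = 2 * (n + 1) by ring, mul_pow 2]
    simp only [← pow_mul]
    simp only [← pow_mul] at ih
    norm_num at ih ⊢
    linear_combination ih

lemma phm4 : ∃ K, phm ^ 4 = 1 + 8 * K := by
  have : ∃ S, phm = 1 + 2 * S := by
    obtain ⟨S, hS⟩ := lim_exists (fun n => ∑ i ∈ range n, (-1) ^ (i + 1) * (X : ℤ⟦X⟧) ^ ((i + 1) ^ 2))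
      (fun n => by
        rw [sum_range_succ, add_sub_cancel_left]
        exact pdvd (by nlinarith) _)
    exact ⟨S, hphm.unique ((Lim.const 1).add ((Lim.const 2).mul hS))⟩
  obtain ⟨S, hS⟩ := this
  exact ⟨S + 3 * S ^ 2 + 4 * S ^ 3 + 2 * S ^ 4, by rw [hS]; ring⟩

end
end RO

namespace RO
open PowerSeries Finset
noncomputable section

section
open scoped PowerSeries.WithPiTopology

lemma lim_of_hasProd (f : ℕ → ℤ⟦X⟧) (L : ℤ⟦X⟧) (h : HasProd f L) :
    Lim (fun n => ∏ i ∈ range n, f i) L := by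
  intro n
  have h1 := h.tendsto_prod_nat
  rw [WithPiTopology.tendsto_iff_coeff_tendsto] at h1
  have h2 : ∀ k ∈ range n, ∀ᶠ m in Filter.atTop,
      coeff k (∏ i ∈ range m, f i) = coeff k L := by
    intro k _
    have := h1 k
    rw [nhds_discrete, Filter.tendsto_pure] at this
    exact this
  rw [← Filter.eventually_all_finset, Filter.eventually_atTop] at h2
  obtain ⟨N, hN⟩ := h2
  refine ⟨N, fun m hm => ?_⟩
  rw [X_pow_dvd_iff]
  intro k hk
  rw [map_sub, hN m hm k (mem_range.2 hk), sub_self]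

def Mg : ℤ⟦X⟧ := PowerSeries.mk fun n => ((Nat.Partition.restricted n (fun i => i % 8 ≠ 4)).card : ℤ)
def Dg : ℤ⟦X⟧ := PowerSeries.mk fun n =>
  (((Nat.Partition.distincts n).filter (fun lam => ∀ i ∈ lam.parts, i % 8 ≠ 4)).card : ℤ)

lemma hMg : Lim (fun n => ∏ i ∈ range n,
    if (i + 1) % 8 ≠ 4 then ∑' j : ℕ, (X : ℤ⟦X⟧) ^ ((i + 1) * j) else 1) Mg :=
  lim_of_hasProd _ _ (Nat.Partition.hasProd_powerSeriesMk_card_restricted ℤ (fun i => i % 8 ≠ 4))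

def Fp (n : ℕ) : ℤ⟦X⟧ := ∏ i ∈ range n, if (i + 1) % 8 ≠ 4 then (1 - X ^ (i + 1)) else 1
def Bp (n : ℕ) : ℤ⟦X⟧ := ∏ i ∈ range n, if (i + 1) % 8 ≠ 4 then (1 + X ^ (i + 1)) else 1

lemma hMFp : Lim (fun n => Mg * Fp n) 1 := by
  intro n
  obtain ⟨N, hN⟩ := hMg n
  refine ⟨N, fun m hm => ?_⟩
  have h1 := hN m hm
  have h2 : (∏ i ∈ range m,
    if (i + 1) % 8 ≠ 4 then ∑' j : ℕ, (X : ℤ⟦X⟧) ^ ((i + 1) * j) else 1) * Fp m = 1 := by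
    rw [Fp, ← prod_mul_distrib]
    refine prod_eq_one fun i _ => ?_
    split_ifs
    · simp_rw [pow_mul]
      exact WithPiTopology.tsum_pow_mul_one_sub_of_constantCoeff_eq_zero (by simp)
    · simp
  rw [← h2, ← sub_mul, ← neg_sub, neg_mul, dvd_neg]
  exact h1.mul_right _

lemma hDg : Lim Bp Dg := by
  have h := lim_of_hasProd _ _
    (Nat.Partition.hasProd_genFun (fun i c => if i % 8 ≠ 4 ∧ c < 2 then (1 : ℤ) else 0))
  have e : Nat.Partition.genFun (fun i c => if i % 8 ≠ 4 ∧ c < 2 then (1 : ℤ) else 0) = Dg := by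
    ext n
    rw [Nat.Partition.coeff_genFun, Dg, coeff_mk, ← Nat.Partition.countRestricted_two,
      Nat.Partition.countRestricted, filter_filter, card_filter]
    simp_rw [Finsupp.prod, prod_boole]
    push_cast
    refine sum_congr rfl fun p _ => ?_
    congr 1
    simp only [Multiset.toFinsupp_support, Multiset.mem_toFinset, Multiset.toFinsupp_apply, eq_iff_iff]
    constructor
    · intro hh; exact ⟨fun i hi => (hh i hi).2, fun i hi => (hh i hi).1⟩
    · intro hh i hi; exact ⟨hh.2 i hi, hh.1 i hi⟩
  rw [e] at h
  refine h.congr' fun n => ?_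
  rw [Bp]
  refine prod_congr rfl fun i _ => ?_
  rw [tsum_eq_single 0]
  · split_ifs with h1 h2 h2
    · rw [PowerSeries.smul_eq_C_mul]; simp
    · omega
    · omega
    · rw [PowerSeries.smul_eq_C_mul]; simp
  · intro j hj
    rw [if_neg (by omega), PowerSeries.smul_eq_C_mul, map_zero, zero_mul]
end

def G : ℤ⟦X⟧ := PowerSeries.mk fun n => (regularOverpartitions 4 8 n : ℤ)

lemma G_eq : G = Dg * Mg := by
  ext n
  rw [coeff_mul, Finset.Nat.sum_antidiagonal_eq_sum_range_succ_mk]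
  simp only [G, Dg, Mg, coeff_mk, regularOverpartitions]
  push_cast
  rfl

lemma Fp_mul (n : ℕ) : Fp (8 * n) * ex 3 (Fn (2 * n)) = Fn (8 * n) * ex 7 (Fn n) := by
  rw [ex_Fn, ex_Fn]
  induction n with
  | zero => simp [Fp, Fn, qf]
  | succ n ih =>
    have e : Fp (8 * (n + 1)) = Fp (8 * n) * (1 - X ^ (8 * n + 1)) * (1 - X ^ (8 * n + 2))
       * (1 - X ^ (8 * n + 3)) * (1 - X ^ (8 * n + 5)) * (1 - X ^ (8 * n + 6)) * (1 - X ^ (8 * n + 7))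
       * (1 - X ^ (8 * n + 8)) := by
      rw [show 8 * (n + 1) = 8 * n + 1 + 1 + 1 + 1 + 1 + 1 + 1 + 1 by ring]
      simp only [Fp, prod_range_succ]
      rw [if_pos (by omega), if_pos (by omega), if_pos (by omega), if_neg (by omega),
        if_pos (by omega), if_pos (by omega), if_pos (by omega), if_pos (by omega), mul_one]
    have e2 : Fn (8 * (n + 1)) = Fn (8 * n) * (1 - X ^ (8 * n + 1)) * (1 - X ^ (8 * n + 2))
       * (1 - X ^ (8 * n + 3)) * (1 - X ^ (8 * n + 4)) * (1 - X ^ (8 * n + 5)) * (1 - X ^ (8 * n + 6))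
       * (1 - X ^ (8 * n + 7)) * (1 - X ^ (8 * n + 8)) := by
      rw [show 8 * (n + 1) = 8 * n + 1 + 1 + 1 + 1 + 1 + 1 + 1 + 1 by ring]
      simp only [Fn, qf_succ]
    rw [e, e2, show 2 * (n + 1) = 2 * n + 1 + 1 by ring]
    simp only [qf_succ, ← pow_mul]
    rw [show (3 + 1) * (2 * n + 1) = 8 * n + 4 by ring, show (3 + 1) * (2 * n + 1 + 1) = 8 * n + 8 by ring,
      show (7 + 1) * (n + 1) = 8 * n + 8 by ring]
    generalize (1 - (X : ℤ⟦X⟧) ^ (8 * n + 1)) = x1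
    generalize (1 - (X : ℤ⟦X⟧) ^ (8 * n + 2)) = x2
    generalize (1 - (X : ℤ⟦X⟧) ^ (8 * n + 3)) = x3
    generalize (1 - (X : ℤ⟦X⟧) ^ (8 * n + 4)) = x4
    generalize (1 - (X : ℤ⟦X⟧) ^ (8 * n + 5)) = x5
    generalize (1 - (X : ℤ⟦X⟧) ^ (8 * n + 6)) = x6
    generalize (1 - (X : ℤ⟦X⟧) ^ (8 * n + 7)) = x7
    generalize (1 - (X : ℤ⟦X⟧) ^ (8 * n + 8)) = x8
    linear_combination (x1 * x2 * x3 * x4 * x5 * x6 * x7 * x8 * x8) * ih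

lemma ex_Bn (d n : ℕ) : ex d (Bn n) = ∏ i ∈ range n, (1 + (X ^ (d + 1)) ^ (i + 1)) := by
  simp [Bn, map_prod, ex_X]

lemma Bp_mul (n : ℕ) : Bp (8 * n) * ex 3 (Bn (2 * n)) = Bn (8 * n) * ex 7 (Bn n) := by
  rw [ex_Bn, ex_Bn]
  induction n with
  | zero => simp [Bp, Bn]
  | succ n ih =>
    have e : Bp (8 * (n + 1)) = Bp (8 * n) * (1 + X ^ (8 * n + 1)) * (1 + X ^ (8 * n + 2))
       * (1 + X ^ (8 * n + 3)) * (1 + X ^ (8 * n + 5)) * (1 + X ^ (8 * n + 6)) * (1 + X ^ (8 * n + 7))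
       * (1 + X ^ (8 * n + 8)) := by
      rw [show 8 * (n + 1) = 8 * n + 1 + 1 + 1 + 1 + 1 + 1 + 1 + 1 by ring]
      simp only [Bp, prod_range_succ]
      rw [if_pos (by omega), if_pos (by omega), if_pos (by omega), if_neg (by omega),
        if_pos (by omega), if_pos (by omega), if_pos (by omega), if_pos (by omega), mul_one]
    have e2 : Bn (8 * (n + 1)) = Bn (8 * n) * (1 + X ^ (8 * n + 1)) * (1 + X ^ (8 * n + 2))
       * (1 + X ^ (8 * n + 3)) * (1 + X ^ (8 * n + 4)) * (1 + X ^ (8 * n + 5)) * (1 + X ^ (8 * n + 6))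
       * (1 + X ^ (8 * n + 7)) * (1 + X ^ (8 * n + 8)) := by
      rw [show 8 * (n + 1) = 8 * n + 1 + 1 + 1 + 1 + 1 + 1 + 1 + 1 by ring]
      simp only [Bn, prod_range_succ]
    rw [e, e2, show 2 * (n + 1) = 2 * n + 1 + 1 by ring]
    simp only [prod_range_succ, ← pow_mul] at ih ⊢
    rw [show (3 + 1) * (2 * n + 1) = 8 * n + 4 by ring, show (3 + 1) * (2 * n + 1 + 1) = 8 * n + 8 by ring,
      show (7 + 1) * (n + 1) = 8 * n + 8 by ring]
    generalize (1 + (X : ℤ⟦X⟧) ^ (8 * n + 1)) = x1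
    generalize (1 + (X : ℤ⟦X⟧) ^ (8 * n + 2)) = x2
    generalize (1 + (X : ℤ⟦X⟧) ^ (8 * n + 3)) = x3
    generalize (1 + (X : ℤ⟦X⟧) ^ (8 * n + 4)) = x4
    generalize (1 + (X : ℤ⟦X⟧) ^ (8 * n + 5)) = x5
    generalize (1 + (X : ℤ⟦X⟧) ^ (8 * n + 6)) = x6
    generalize (1 + (X : ℤ⟦X⟧) ^ (8 * n + 7)) = x7
    generalize (1 + (X : ℤ⟦X⟧) ^ (8 * n + 8)) = x8
    linear_combination (x1 * x2 * x3 * x4 * x5 * x6 * x7 * x8 * x8) * ih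

lemma MgF : ex 3 F = Mg * (F * ex 7 F) := by
  have h8 : ∀ m : ℕ, m ≤ 8 * m := fun m => by omega
  have h2 : ∀ m : ℕ, m ≤ 2 * m := fun m => by omega
  have a := (hMFp.comp (fun n => 8 * n) h8).mul ((hF.ex 3).comp (fun n => 2 * n) h2)
  have b := (Lim.const Mg).mul ((hF.comp (fun n => 8 * n) h8).mul (hF.ex 7))
  have := a.unique (b.congr' fun n => by
    beta_reduce
    rw [← Fp_mul]; ring)
  rw [← this, one_mul]

lemma DgB : Dg * ex 3 B = B * ex 7 B := by
  have h8 : ∀ m : ℕ, m ≤ 8 * m := fun m => by omega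
  have h2 : ∀ m : ℕ, m ≤ 2 * m := fun m => by omega
  have a := (hDg.comp (fun n => 8 * n) h8).mul ((hB.ex 3).comp (fun n => 2 * n) h2)
  have b := ((hB.comp (fun n => 8 * n) h8).mul (hB.ex 7))
  exact a.unique (b.congr' fun n => (Bp_mul n).symm)

lemma B_ne : B ≠ 0 := by
  intro h; have := OB; rw [h, mul_zero] at this; exact zero_ne_one this
lemma phm_ne : phm ≠ 0 := by
  intro h; have := phmB; rw [h, zero_mul] at this; exact ne0 F0 this.symm
lemma ex_ne (d : ℕ) {f : ℤ⟦X⟧} (hf : f ≠ 0) : ex d f ≠ 0 := by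
  intro h
  apply hf
  ext n
  have := congrArg (coeff ((d + 1) * n)) h
  rw [coeff_ex, if_pos (Dvd.intro _ rfl), Nat.mul_div_cancel_left _ (by omega)] at this
  simpa using this

lemma G_phm : G * phm * ex 7 phm = ex 3 phm := by
  have h3 := congrArg (ex 3) phmB
  have h7 := congrArg (ex 7) phmB
  rw [map_mul] at h3 h7
  have h0 := phmB
  have hM := MgF
  have hD := DgB
  have hne : ex 3 B * (B * ex 7 B) ≠ 0 :=
    mul_ne_zero (ex_ne 3 B_ne) (mul_ne_zero B_ne (ex_ne 7 B_ne))
  apply mul_left_cancel₀ hne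
  rw [G_eq]
  rw [← h3, ← h7, ← h0] at hM
  linear_combination  (Mg * phm * B * ex 7 phm * ex 7 B) * hD - (B * ex 7 B) * hM

lemma G_main : G * (ex 3 phm ^ 3 * ex 7 phm) = php * ex 1 php ^ 2 := by
  have h1 := phipm
  have h2 := congrArg (ex 1) phipm
  rw [map_mul, map_pow, ex_ex 1 1 3 rfl] at h2
  apply mul_left_cancel₀ (ex_ne 3 phm_ne)
  have h3 := G_phm
  have : ex 3 phm ^ 4 = php * phm * ex 1 php ^ 2 := by
    rw [h1]; linear_combination -(ex 3 phm ^ 2 + ex 1 php * ex 1 phm) * h2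
  linear_combination G * ex 7 phm * this + php * ex 1 php ^ 2 * h3

/-- section operator -/
def U (r : ℕ) (f : ℤ⟦X⟧) : ℤ⟦X⟧ := PowerSeries.mk fun n => coeff (4 * n + r) f

lemma U_add (r : ℕ) (f g : ℤ⟦X⟧) : U r (f + g) = U r f + U r g := by
  ext n; simp [U]

lemma U_X (r s : ℕ) (hr : r < 4) (hs : s < 4) (g : ℤ⟦X⟧) :
    U r (X ^ s * ex 3 g) = if r = s then g else 0 := by
  ext n
  rw [U, coeff_mk, coeff_X_pow_mul', coeff_ex]
  split_ifs with h1 h2 h3 h3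
  · subst h3; rw [show (4 * n + r - r) / (3 + 1) = n by omega]
  · omega
  · omega
  · simp
  · omega
  · simp

lemma decomp (f : ℤ⟦X⟧) : f = X ^ 0 * ex 3 (U 0 f) + X ^ 1 * ex 3 (U 1 f) + X ^ 2 * ex 3 (U 2 f)
    + X ^ 3 * ex 3 (U 3 f) := by
  ext n
  simp only [map_add, coeff_X_pow_mul', coeff_ex, U, coeff_mk]
  obtain ⟨m, r, hr, rfl⟩ : ∃ m r, r < 4 ∧ n = 4 * m + r := ⟨n / 4, n % 4, by omega, by omega⟩
  have hd : ∀ s, s < 4 → (3 + 1 ∣ 4 * m + r - s ∧ s ≤ 4 * m + r ↔ s = r) := by intro s hs; omega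
  have key : ∀ s, s < 4 → (if s ≤ 4 * m + r then if 3 + 1 ∣ 4 * m + r - s then
      coeff (4 * ((4 * m + r - s) / (3 + 1)) + s) f else 0 else 0)
      = if s = r then coeff (4 * m + r) f else 0 := by
    intro s hs
    have := hd s hs
    split_ifs with h1 h2 h3 h3 h3
    · congr 1; subst h3; rw [show (4 * m + s - s) / (3+1) = m by omega]
    · tauto
    · tauto
    · rfl
    · omega
    · rfl
  rw [key 0 (by omega), key 1 (by omega), key 2 (by omega), key 3 (by omega)]
  interval_cases r <;> simp

lemma U_mul (f g : ℤ⟦X⟧) : U 2 (f * ex 3 g) = U 2 f * g := by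
  conv_lhs => rw [decomp f]
  have : (X ^ 0 * ex 3 (U 0 f) + X ^ 1 * ex 3 (U 1 f) + X ^ 2 * ex 3 (U 2 f)
    + X ^ 3 * ex 3 (U 3 f)) * ex 3 g = X ^ 0 * ex 3 (U 0 f * g) + X ^ 1 * ex 3 (U 1 f * g)
      + X ^ 2 * ex 3 (U 2 f * g) + X ^ 3 * ex 3 (U 3 f * g) := by
    simp only [map_mul]; ring
  rw [this]
  rw [U_add, U_add, U_add, U_X _ _ (by omega) (by omega), U_X _ _ (by omega) (by omega),
    U_X _ _ (by omega) (by omega), U_X _ _ (by omega) (by omega)]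
  simp

lemma H_eq : U 2 G * (phm ^ 3 * ex 1 phm) = 4 * (php * ex 1 php * ex 3 psi) := by
  rw [← U_mul, map_mul, map_pow, ex_ex 3 1 7 rfl, G_main]
  have d := dissect
  have d1 := congrArg (ex 1) dissect
  simp only [map_add, map_mul, map_ofNat, ex_X] at d1
  rw [ex_ex 1 3 7 rfl, ex_ex 1 7 15 rfl] at d1
  have : php * ex 1 php ^ 2
     = X ^ 0 * ex 3 (php * (ex 1 php ^ 2 + 4 * X * ex 3 psi ^ 2))
     + X ^ 1 * ex 3 (2 * ex 1 psi * (ex 1 php ^ 2 + 4 * X * ex 3 psi ^ 2))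
     + X ^ 2 * ex 3 (4 * (php * ex 1 php * ex 3 psi))
     + X ^ 3 * ex 3 (2 * ex 1 psi * (4 * ex 1 php * ex 3 psi)) := by
    simp only [map_add, map_mul, map_pow, map_ofNat, ex_X, ex_ex 3 1 7 rfl, ex_ex 3 3 15 rfl]
    rw [d1]
    linear_combination ((ex 7 php + 2 * X ^ 2 * ex 15 psi) ^ 2) * d
  rw [this]
  rw [U_add, U_add, U_add, U_X _ _ (by omega) (by omega), U_X _ _ (by omega) (by omega),
    U_X _ _ (by omega) (by omega), U_X _ _ (by omega) (by omega)]
  simp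

lemma H_eq2 : U 2 G * phm ^ 4 = 4 * ex 3 (F ^ 3) := by
  have h1 := phipm
  have h2 := congrArg (ex 1) phipm
  rw [map_mul, map_pow, ex_ex 1 1 3 rfl] at h2
  have h3 := congrArg (ex 3) phipsi
  rw [map_mul, map_pow] at h3
  have h4 := H_eq
  apply mul_left_cancel₀ (ex_ne 1 phm_ne)
  rw [← h3]
  linear_combination phm * h4 + 4 * ex 1 php * ex 3 psi * h1 + 4 * ex 1 phm * ex 3 psi * h2

lemma base (n : ℕ) : (32 : ℤ) ∣ (regularOverpartitions 4 8 (16 * n + 2) : ℤ) - 4 * jacobiCoeff n := by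
  obtain ⟨K, hK⟩ := phm4
  have h := H_eq2
  rw [hK] at h
  have h1 : U 2 G = 4 * ex 3 (F ^ 3) + 32 * (-K * (ex 3 (F ^ 3) - 2 * (U 2 G * K))) := by
    linear_combination (1 - 8 * K) * h
  have h2 := congrArg (coeff (4 * n)) h1
  have c4 : (4 : ℤ⟦X⟧) = C 4 := by rw [map_ofNat]
  have c32 : (32 : ℤ⟦X⟧) = C 32 := by rw [map_ofNat]
  rw [map_add, c4, c32, coeff_C_mul, coeff_C_mul, coeff_ex, if_pos (by omega),
    show 4 * n / (3 + 1) = n by omega, U, coeff_mk, G, coeff_mk,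
    show 4 * (4 * n) + 2 = 16 * n + 2 by ring] at h2
  have h3 := J_coeff n
  rw [J_val] at h3
  rw [h2]
  omega

lemma Jcong (K n k : ℕ) (hK : K % 2 = 1) (hk : 8 * k + 1 = K ^ 4 * (8 * n + 1)) :
    (8 : ℤ) ∣ jacobiCoeff k - jacobiCoeff n := by
  have huniq : ∀ a b : ℕ, a * (a + 1) = b * (b + 1) → a = b := by
    intro a b hab
    rcases lt_trichotomy a b with h | h | h
    · nlinarith
    · exact h
    · nlinarith
  have hK8 : ∃ t, K ^ 2 = 8 * t + 1 := by
    refine ⟨K ^ 2 / 8, ?_⟩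
    have : K ^ 2 % 8 = 1 := by
      have h8 : K % 8 = 1 ∨ K % 8 = 3 ∨ K % 8 = 5 ∨ K % 8 = 7 := by omega
      rcases h8 with h | h | h | h <;> simp [Nat.pow_mod, h]
    omega
  obtain ⟨t, ht⟩ := hK8
  have hval : ∀ n m : ℕ, 2 * n = m * (m + 1) → jacobiCoeff n = (-1) ^ m * (2 * (m : ℤ) + 1) := by
    intro n m h
    have hex : ∃ m : ℕ, 2 * n = m * (m + 1) := ⟨m, h⟩
    rw [jacobiCoeff, dif_pos hex, huniq hex.choose m (by rw [← h]; exact hex.choose_spec.symm)]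
  by_cases hn : ∃ m : ℕ, 2 * n = m * (m + 1)
  · obtain ⟨m, hm⟩ := hn
    have hk2 : 2 * k = (m + 4 * (t * (2 * m + 1))) * (m + 4 * (t * (2 * m + 1)) + 1) := by
      have e : K ^ 4 = (8 * t + 1) ^ 2 := by rw [← ht]; ring
      rw [e] at hk
      have e2 : 8 * n + 1 = (2 * m + 1) ^ 2 := by
        rw [show 8 * n = 4 * (2 * n) by ring, hm]; ring
      rw [e2] at hk
      have : 4 * (2 * k) + 1 = 4 * ((m + 4 * (t * (2 * m + 1))) * (m + 4 * (t * (2 * m + 1)) + 1)) + 1 := by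
        rw [show 4 * (2 * k) + 1 = 8 * k + 1 by ring, hk]; ring
      omega
    rw [hval n m hm, hval k _ hk2]
    have : (-1 : ℤ) ^ (m + 4 * (t * (2 * m + 1))) = (-1) ^ m := by
      rw [pow_add, pow_mul]; norm_num
    rw [this]
    push_cast
    exact ⟨(-1) ^ m * (t * (2 * m + 1)), by ring⟩
  · have hk' : ¬ ∃ m : ℕ, 2 * k = m * (m + 1) := by
      rintro ⟨m, hm⟩
      apply hn
      have e2 : (2 * m + 1) ^ 2 = (K ^ 2) ^ 2 * (8 * n + 1) := by
        rw [← pow_mul, ← hk, show 8 * k = 4 * (2 * k) by ring, hm]; ring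
      have hd : K ^ 2 ∣ 2 * m + 1 := by
        rw [← Nat.pow_dvd_pow_iff (n := 2) (by omega)]
        exact ⟨_, e2⟩
      obtain ⟨c, hc⟩ := hd
      rw [hc, mul_pow] at e2
      have hpos : 0 < (K ^ 2) ^ 2 := Nat.pow_pos (Nat.pow_pos (by omega))
      have hc2 : c ^ 2 = 8 * n + 1 := Nat.eq_of_mul_eq_mul_left hpos e2
      have hodd : c % 2 = 1 := by
        rcases Nat.mod_two_eq_zero_or_one c with h | h
        · have : c ^ 2 % 2 = 0 := by simp [Nat.pow_mod, h]
          omega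
        · exact h
      refine ⟨c / 2, ?_⟩
      obtain ⟨d, rfl⟩ : ∃ d, c = 2 * d + 1 := ⟨c / 2, by omega⟩
      rw [show (2 * d + 1) / 2 = d by omega]
      nlinarith
    rw [jacobiCoeff, dif_neg hk', jacobiCoeff, dif_neg hn]; simp

end
end RO

theorem stmt_3 (n α β γ : ℕ) :
    (regularOverpartitions 4 8
        (16 * (3 ^ (4 * α) * 5 ^ (4 * β) * 7 ^ (4 * γ)) * n
          + 2 * (3 ^ (4 * α) * 5 ^ (4 * β) * 7 ^ (4 * γ))) : ℤ)
      ≡ 4 * jacobiCoeff n [ZMOD 32] := by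
  set K := 3 ^ α * 5 ^ β * 7 ^ γ with hK
  have e : 3 ^ (4 * α) * 5 ^ (4 * β) * 7 ^ (4 * γ) = K ^ 4 := by
    rw [hK, mul_pow, mul_pow, ← pow_mul, ← pow_mul, ← pow_mul, mul_comm α, mul_comm β, mul_comm γ]
  have hodd : Odd K := by
    rw [hK]
    exact ((Odd.pow (by decide)).mul (Odd.pow (by decide))).mul (Odd.pow (by decide))
  have hK2 : K % 2 = 1 := Nat.odd_iff.1 hodd
  have h8 : K ^ 4 % 8 = 1 := by
    have h8 : K % 8 = 1 ∨ K % 8 = 3 ∨ K % 8 = 5 ∨ K % 8 = 7 := by omega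
    rcases h8 with h | h | h | h <;> simp [Nat.pow_mod, h]
  obtain ⟨t, ht⟩ : ∃ t, K ^ 4 = 8 * t + 1 := ⟨K ^ 4 / 8, by omega⟩
  have hb := RO.base (K ^ 4 * n + t)
  have hc := RO.Jcong K n (K ^ 4 * n + t) hK2 (by
    rw [show K ^ 4 * (8 * n + 1) = 8 * (K ^ 4 * n) + K ^ 4 by ring]; omega)
  have e2 : 16 * K ^ 4 * n + 2 * K ^ 4 = 16 * (K ^ 4 * n + t) + 2 := by
    rw [mul_add, mul_assoc]; omega
  rw [e, e2]
  apply Int.ModEq.symm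
  rw [Int.modEq_iff_dvd]
  omega
end
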